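/- Let K satisfy Assumption A, let T > 0, and let f_in be a nonzero nonnegative Radon measure on (0,∞) with ∫(1+v^γ) f_in(dv) < ∞ and ∫ v f_in(dv) < ∞. Then there exists a mass-conserving weak solution of the coagulation equation on [0,T] with kernel K and initial datum f_in if and only if f_in = M·δ_V for some M, V ∈ (0,∞). -/

import Mathlib

open MeasureTheory Set Filter

noncomputable section

/-- Assumption A on the coagulation kernel `K(v,v') = h(v,v') g(v/(v+v'))`. -/
structure KernelAssumptionA (K : ℝ → ℝ → ℝ) (h : ℝ → ℝ → ℝ) (g : ℝ → ℝ)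
    (γ H H₀ H₁ G₀ G₁ k : ℝ) : Prop where
  K_nonneg : ∀ v v', 0 ≤ v → 0 ≤ v' → 0 ≤ K v v'
  K_eq : ∀ v v', 0 ≤ v → 0 ≤ v' → 0 < v + v' →
      K v v' = h v v' * g (v / (v + v'))
  h_cont : ContinuousOn (fun p : ℝ × ℝ => h p.1 p.2) (Ici 0 ×ˢ Ici 0)
  h_symm : ∀ v v', h v v' = h v' v
  γ_gt_one : 1 < γ
  H_gt_one : 1 < H
  H₀_pos : 0 < H₀
  h_lower : ∀ v v', 0 ≤ v → 0 ≤ v' → H < v + v' →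
      H₀ * (v ^ γ + v' ^ γ) ≤ h v v'
  h_posOn : ∀ R : ℝ, 0 < R → ∃ C : ℝ, 0 < C ∧
      ∀ v ∈ Icc (1 / R) R, ∀ v' ∈ Icc (1 / R) R, C ≤ h v v'
  H₁_pos : 0 < H₁
  h_upper : ∀ v v', 0 ≤ v → 0 ≤ v' → h v v' ≤ H₁ * (v ^ γ + v' ^ γ)
  g_cont : ContinuousOn g (Icc 0 1)
  g_symm : ∀ x ∈ Icc (0 : ℝ) 1, g x = g (1 - x)
  g_half : g (1 / 2) = 0
  G₀_pos : 0 < G₀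
  G₁_pos : 0 < G₁
  k_ge_one : 1 ≤ k
  g_lower : ∀ x ∈ Icc (0 : ℝ) 1, G₀ * |x - 1 / 2| ^ k ≤ g x
  g_upper : ∀ x ∈ Icc (0 : ℝ) 1, g x ≤ G₁

/-- Weak solution of the coagulation equation on `[0, T]` with kernel `K`
and initial datum `fin`, in the sense of measures on `(0,∞)`. -/
structure IsWeakSolution (K : ℝ → ℝ → ℝ) (γ T : ℝ)
    (f : ℝ → Measure ℝ) (fin : Measure ℝ) : Prop where
  conc : ∀ t ∈ Icc (0 : ℝ) T, f t (Iic 0) = 0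
  time_cont : ∀ φ : ℝ → ℝ, Continuous φ → (∃ M : ℝ, ∀ v, |φ v| ≤ M) →
      ContinuousOn (fun t => ∫ v, φ v ∂(f t)) (Icc (0 : ℝ) T)
  moment_bound : ∃ C : ℝ, ∀ t ∈ Icc (0 : ℝ) T,
      Integrable (fun v => 1 + v ^ γ) (f t) ∧ (∫ v, (1 + v ^ γ) ∂(f t)) ≤ C
  weak_form : ∀ φ : ℝ → ℝ, Continuous φ → HasCompactSupport φ →
      tsupport φ ⊆ Ioi 0 → ∀ t ∈ Icc (0 : ℝ) T,
      (∫ v, φ v ∂(f t)) - (∫ v, φ v ∂fin) =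
        (1 / 2) * ∫ s in (0 : ℝ)..t,
          (∫ v, (∫ v', K v v' * (φ (v + v') - φ v - φ v') ∂(f s)) ∂(f s))

/-- The solution conserves mass on `[0, T]`. -/
def IsMassConserving (T : ℝ) (f : ℝ → Measure ℝ) (fin : Measure ℝ) : Prop :=
  Integrable (fun v => v) fin ∧
    ∀ t ∈ Icc (0 : ℝ) T,
      Integrable (fun v => v) (f t) ∧ (∫ v, v ∂(f t)) = ∫ v, v ∂fin

/-- `μ` is a single Dirac measure `M • δ_V` with `M, V ∈ (0,∞)`. -/
def IsSingleDirac (μ : Measure ℝ) : Prop :=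
  ∃ M V : ℝ, 0 < M ∧ 0 < V ∧ μ = ENNReal.ofReal M • Measure.dirac V

open scoped Topology BoundedContinuousFunction

/-!
A Dirac measure at `V` is stationary because `K V V = 0`. Conversely, two distinct points of the
support interact, and so do each of them and their sum, so the support reaches arbitrarily large
sizes instantly. Assume that mass is conserved and write `p = γ - 1`. The moment bound keeps half
of the mass at sizes below some `B`, and a particle of size `v ≥ L` absorbs such particles at a rate
of order `v ^ γ`. The mass carried by the sizes beyond `L`, measured with the cutoff
`exp (1 - Λ * v ^ (-p))`, therefore grows at least like `exp (b * Λ * t)`, with `b` independent of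
`Λ`. At a positive time it is at least of order `exp (-Λ * L₀ ^ (-p))`, where `L₀` can be chosen
with `L₀ ^ (-p) < b * t`, so `Λ → ∞` contradicts the bound by the total mass.
-/

section Gronwall

variable {X : ℝ → ℝ} {a b μ : ℝ}

theorem exp_mul_le_of_add_mul_integral_le (hμ : 0 ≤ μ) (hab : a ≤ b)
    (hX : ContinuousOn X (Icc a b))
    (h : ∀ t ∈ Icc a b, X a + μ * ∫ s in a..t, X s ≤ X t) :
    Real.exp (μ * (b - a)) * X a ≤ X b := by
  have hint : IntervalIntegrable X volume a b := hX.intervalIntegrable_of_Icc hab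
  set Y : ℝ → ℝ := fun t => Real.exp (-(μ * (t - a))) * (X a + μ * ∫ s in a..t, X s)
  have hY : ∀ t ∈ Ioo a b, HasDerivAt Y
      (Real.exp (-(μ * (t - a))) * (μ * (X t - (X a + μ * ∫ s in a..t, X s)))) t := by
    intro t ht
    have hprim : HasDerivAt (fun t => X a + μ * ∫ s in a..t, X s) (μ * X t) t :=
      ((intervalIntegral.integral_hasDerivAt_right
        (hint.mono_set (uIcc_subset_uIcc_left (Icc_subset_uIcc (Ioo_subset_Icc_self ht))))
        (hX.mono Ioo_subset_Icc_self |>.stronglyMeasurableAtFilter isOpen_Ioo t ht)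
        (hX.continuousAt (Icc_mem_nhds ht.1 ht.2))).const_mul μ).const_add _
    have hexp : HasDerivAt (fun t => Real.exp (-(μ * (t - a))))
        (Real.exp (-(μ * (t - a))) * -(μ * 1)) t :=
      (((hasDerivAt_id t).sub_const a).const_mul μ).neg.exp
    exact (hexp.mul hprim).congr_deriv (by ring)
  have hmono : MonotoneOn Y (Icc a b) := by
    refine monotoneOn_of_hasDerivWithinAt_nonneg (convex_Icc a b) ?_
      (fun t ht => (hY t (interior_Icc (a := a) ▸ ht)).hasDerivWithinAt) fun t ht => ?_
    · have := intervalIntegral.continuousOn_primitive_interval' hint left_mem_uIcc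
      rw [uIcc_of_le hab] at this
      fun_prop
    · have := h t (interior_subset ht)
      exact mul_nonneg (Real.exp_pos _).le (mul_nonneg hμ (by linarith))
  have hle : X a ≤ Real.exp (-(μ * (b - a))) * X b := by
    calc X a = Y a := by simp [Y]
      _ ≤ Y b := hmono (left_mem_Icc.2 hab) (right_mem_Icc.2 hab) hab
      _ ≤ _ := mul_le_mul_of_nonneg_left (h b (right_mem_Icc.2 hab)) (Real.exp_pos _).le
  rwa [Real.exp_neg, inv_mul_eq_div, le_div_iff₀' (Real.exp_pos _)] at hle

theorem le_exp_mul_of_le_add_mul_integral (hμ : 0 ≤ μ) (hab : a ≤ b)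
    (hX : ContinuousOn X (Icc a b))
    (h : ∀ t ∈ Icc a b, X t ≤ X b + μ * ∫ s in t..b, X s) :
    X a ≤ Real.exp (μ * (b - a)) * X b := by
  have hrev := exp_mul_le_of_add_mul_integral_le (X := fun t => -X (-t)) hμ (neg_le_neg hab)
    (by
      refine (hX.comp continuousOn_neg fun t ht => ?_).neg
      exact ⟨le_neg_of_le_neg ht.2, neg_le_of_neg_le ht.1⟩)
    fun t ht => by
      have := h (-t) ⟨le_neg_of_le_neg ht.2, neg_le_of_neg_le ht.1⟩
      rw [intervalIntegral.integral_neg, intervalIntegral.integral_comp_neg, neg_neg]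
      linarith
  simp only [neg_neg, neg_sub_neg] at hrev
  linarith

end Gronwall

section TimeMeasurability

variable {α E : Type*} [MeasurableSpace α] [MeasurableSpace E] {μ : α → Measure E}
  [∀ a, IsFiniteMeasure (μ a)]

theorem measurable_measure_of_measurable_integral [TopologicalSpace E] [HasOuterApproxClosed E]
    [BorelSpace E] (h : ∀ φ : E →ᵇ ℝ, Measurable fun a => ∫ x, φ x ∂μ a) : Measurable μ := by
  have hclosed (F : Set E) (hF : IsClosed F) : Measurable fun a => μ a F := by
    refine measurable_of_tendsto_metrizable (fun n => ?_) (tendsto_pi_nhds.2 fun a =>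
      HasOuterApproxClosed.tendsto_lintegral_apprSeq hF (μ a))
    let φ : E →ᵇ ℝ := ⟨⟨fun x => hF.apprSeq n x,
      NNReal.continuous_coe.comp (hF.apprSeq n).continuous⟩, (hF.apprSeq n).map_bounded'⟩
    have hφ (a : α) : ∫⁻ x, hF.apprSeq n x ∂μ a = ENNReal.ofReal (∫ x, φ x ∂μ a) := by
      rw [← ENNReal.ofReal_toReal ((hF.apprSeq n).lintegral_lt_top_of_nnreal (μ a)).ne,
        BoundedContinuousFunction.toReal_lintegral_coe_eq_integral]
      rfl
    simpa only [hφ] using (h φ).ennreal_ofReal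
  exact Measurable.measure_of_isPiSystem (BorelSpace.measurable_eq.trans
    borel_eq_generateFrom_isClosed) isPiSystem_isClosed hclosed (hclosed _ isClosed_univ)

theorem measurable_measure_prod_self (hμ : Measurable μ) :
    Measurable fun a => (μ a).prod (μ a) := by
  have hrect (s t : Set E) (hs : MeasurableSet s) (ht : MeasurableSet t) :
      Measurable fun a => (μ a).prod (μ a) (s ×ˢ t) := by
    simp only [Measure.prod_prod]
    exact ((Measure.measurable_coe hs).comp hμ).mul ((Measure.measurable_coe ht).comp hμ)
  refine Measurable.measure_of_isPiSystem generateFrom_prod.symm isPiSystem_prod ?_ ?_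
  · rintro _ ⟨s, hs, t, ht, rfl⟩
    exact hrect s t hs ht
  · simpa only [univ_prod_univ] using hrect univ univ .univ .univ

theorem measurable_integral_prod_self (hμ : Measurable μ) {F : E × E → ℝ} (hF : Measurable F) :
    Measurable fun a => ∫ p, F p ∂(μ a).prod (μ a) :=
  (StronglyMeasurable.integral_kernel (κ := ⟨_, measurable_measure_prod_self hμ⟩)
    hF.stronglyMeasurable).measurable

end TimeMeasurability

/-- The weight `1 + v ^ γ` of the moment bound, extended evenly to negative `v` so that it is
bounded below by `1` on the whole line. -/
def momentWeight (γ v : ℝ) : ℝ := 1 + |v| ^ γ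

section MomentWeight

variable {γ v : ℝ}

theorem one_le_momentWeight : 1 ≤ momentWeight γ v :=
  le_add_of_nonneg_right (by positivity)

theorem momentWeight_pos : 0 < momentWeight γ v :=
  one_pos.trans_le one_le_momentWeight

theorem momentWeight_of_pos (hv : 0 < v) : momentWeight γ v = 1 + v ^ γ := by
  rw [momentWeight, abs_of_pos hv]

theorem continuous_momentWeight (hγ : 0 ≤ γ) : Continuous (momentWeight γ) :=
  continuous_const.add (continuous_abs.rpow_const fun _ => Or.inr hγ)

end MomentWeight

section Kernel

/-- The coagulation kernel as a function on the plane, set to zero off the open positive quadrant,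
where `K` carries no information about particles. -/
def quadrantKernel (K : ℝ → ℝ → ℝ) : ℝ × ℝ → ℝ :=
  (Ioi (0 : ℝ) ×ˢ Ioi (0 : ℝ)).indicator fun p => K p.1 p.2

theorem quadrantKernel_apply {K : ℝ → ℝ → ℝ} {v w : ℝ} (hv : 0 < v) (hw : 0 < w) :
    quadrantKernel K (v, w) = K v w :=
  indicator_of_mem (mk_mem_prod hv hw) _

/-- The properties of a coagulation kernel behind the obstruction to mass conservation: it vanishes
exactly on the diagonal, and particles of bounded size `w` coagulate with a particle of size `v` at
a rate at least of order `v ^ γ`, `γ > 1`, as `v → ∞`. -/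
structure IsOffDiagonalGellingKernel (K : ℝ → ℝ → ℝ) (γ : ℝ) : Prop where
  one_lt : 1 < γ
  measurable : Measurable (quadrantKernel K)
  exists_le : ∃ c, ∀ v w, 0 < v → 0 < w → K v w ≤ c * ((1 + v ^ γ) * (1 + w ^ γ))
  diag : ∀ v, 0 < v → K v v = 0
  pos : ∀ v w, 0 < v → 0 < w → v ≠ w → 0 < K v w
  superlinear : ∀ B, 0 < B → ∃ c₀, 0 < c₀ ∧ ∃ L,
    ∀ v w, L ≤ v → 0 < w → w ≤ B → c₀ * v ^ γ ≤ K v w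

namespace KernelAssumptionA

variable {K h : ℝ → ℝ → ℝ} {g : ℝ → ℝ} {γ H H₀ H₁ G₀ G₁ k v w : ℝ}

theorem div_add_mem_Icc (hv : 0 < v) (hw : 0 < w) : v / (v + w) ∈ Icc (0 : ℝ) 1 :=
  ⟨by positivity, (div_le_one (by positivity)).2 (by linarith)⟩

theorem apply_of_pos (hK : KernelAssumptionA K h g γ H H₀ H₁ G₀ G₁ k) (hv : 0 < v) (hw : 0 < w) :
    K v w = h v w * g (v / (v + w)) :=
  hK.K_eq v w hv.le hw.le (add_pos hv hw)

theorem continuousOn (hK : KernelAssumptionA K h g γ H H₀ H₁ G₀ G₁ k) :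
    ContinuousOn (fun p : ℝ × ℝ => K p.1 p.2) (Ioi 0 ×ˢ Ioi 0) := by
  have hfrac : ContinuousOn (fun p : ℝ × ℝ => p.1 / (p.1 + p.2)) (Ioi 0 ×ˢ Ioi 0) :=
    continuousOn_fst.div (by fun_prop) fun p hp => (add_pos hp.1 hp.2).ne'
  exact ((hK.h_cont.mono (prod_mono Ioi_subset_Ici_self Ioi_subset_Ici_self)).mul
    (hK.g_cont.comp hfrac fun p hp => div_add_mem_Icc hp.1 hp.2)).congr
      fun p hp => hK.apply_of_pos hp.1 hp.2

theorem measurable_quadrantKernel (hK : KernelAssumptionA K h g γ H H₀ H₁ G₀ G₁ k) :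
    Measurable (quadrantKernel K) := by
  classical
  rw [quadrantKernel, ← piecewise_eq_indicator]
  exact hK.continuousOn.measurable_piecewise continuousOn_const
    (measurableSet_Ioi.prod measurableSet_Ioi)

theorem le_mul_one_add_rpow (hK : KernelAssumptionA K h g γ H H₀ H₁ G₀ G₁ k) (hv : 0 < v)
    (hw : 0 < w) : K v w ≤ H₁ * G₁ * ((1 + v ^ γ) * (1 + w ^ γ)) := by
  have hg := div_add_mem_Icc hv hw
  have hg₀ : 0 ≤ g (v / (v + w)) :=
    (mul_nonneg hK.G₀_pos.le (by positivity)).trans (hK.g_lower _ hg)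
  have hH₁ := hK.H₁_pos
  have hG₁ := hK.G₁_pos
  calc K v w = h v w * g (v / (v + w)) := hK.apply_of_pos hv hw
    _ ≤ H₁ * (v ^ γ + w ^ γ) * G₁ := by
        gcongr
        exacts [hK.h_upper v w hv.le hw.le, hK.g_upper _ hg]
    _ = H₁ * G₁ * (v ^ γ + w ^ γ) := by ring
    _ ≤ H₁ * G₁ * ((1 + v ^ γ) * (1 + w ^ γ)) := by
        gcongr
        linarith [mul_pos (Real.rpow_pos_of_pos hv γ) (Real.rpow_pos_of_pos hw γ)]

theorem diag_eq_zero (hK : KernelAssumptionA K h g γ H H₀ H₁ G₀ G₁ k) (hv : 0 < v) :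
    K v v = 0 := by
  rw [hK.apply_of_pos hv hv, show v / (v + v) = 1 / 2 by field_simp; norm_num, hK.g_half, mul_zero]

theorem h_pos (hK : KernelAssumptionA K h g γ H H₀ H₁ G₀ G₁ k) (hv : 0 < v) (hw : 0 < w) :
    0 < h v w := by
  have hv' : 0 < 1 / v := by positivity
  have hw' : 0 < 1 / w := by positivity
  obtain ⟨C, hC, hh⟩ := hK.h_posOn (v + w + 1 / v + 1 / w) (by positivity)
  refine hC.trans_le (hh v ⟨?_, by linarith⟩ w ⟨?_, by linarith⟩)
  · rw [one_div_le (by positivity) hv]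
    linarith
  · rw [one_div_le (by positivity) hw]
    linarith

theorem pos_of_ne (hK : KernelAssumptionA K h g γ H H₀ H₁ G₀ G₁ k) (hv : 0 < v) (hw : 0 < w)
    (hvw : v ≠ w) : 0 < K v w := by
  have hne : v / (v + w) - 1 / 2 ≠ 0 := by
    rw [sub_ne_zero, Ne, div_eq_div_iff (by positivity) (by positivity)]
    exact fun hfrac => hvw (by linarith)
  rw [hK.apply_of_pos hv hw]
  exact mul_pos (hK.h_pos hv hw) <|
    (mul_pos hK.G₀_pos (Real.rpow_pos_of_pos (abs_pos.2 hne) k)).trans_le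
      (hK.g_lower _ (div_add_mem_Icc hv hw))

theorem mul_rpow_le (hK : KernelAssumptionA K h g γ H H₀ H₁ G₀ G₁ k) (hw : 0 < w)
    (hwv : 3 * w ≤ v) (hv : H < v) : H₀ * G₀ * (1 / 4 : ℝ) ^ k * v ^ γ ≤ K v w := by
  have hv₀ : 0 < v := by linarith
  have hH₀ := hK.H₀_pos
  have hG₀ := hK.G₀_pos
  have hh₀ := hK.h_pos hv₀ hw
  have hk : 0 ≤ k := zero_le_one.trans hK.k_ge_one
  have hfrac : 1 / 4 ≤ |v / (v + w) - 1 / 2| := by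
    refine le_trans ?_ (le_abs_self _)
    rw [le_sub_iff_add_le, le_div_iff₀ (by positivity)]
    linarith
  have hh : H₀ * v ^ γ ≤ h v w :=
    le_trans (by gcongr; exact le_add_of_nonneg_right (by positivity))
      (hK.h_lower v w hv₀.le hw.le (by linarith))
  calc H₀ * G₀ * (1 / 4 : ℝ) ^ k * v ^ γ = H₀ * v ^ γ * (G₀ * (1 / 4 : ℝ) ^ k) := by ring
    _ ≤ h v w * (G₀ * |v / (v + w) - 1 / 2| ^ k) := by gcongr
    _ ≤ h v w * g (v / (v + w)) := by
        gcongr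
        exact hK.g_lower _ (div_add_mem_Icc hv₀ hw)
    _ = K v w := (hK.apply_of_pos hv₀ hw).symm

theorem isOffDiagonalGellingKernel (hK : KernelAssumptionA K h g γ H H₀ H₁ G₀ G₁ k) :
    IsOffDiagonalGellingKernel K γ where
  one_lt := hK.γ_gt_one
  measurable := hK.measurable_quadrantKernel
  exists_le := ⟨H₁ * G₁, fun _ _ => hK.le_mul_one_add_rpow⟩
  diag _ := hK.diag_eq_zero
  pos _ _ := hK.pos_of_ne
  superlinear B _ := by
    have hH₀ := hK.H₀_pos
    have hG₀ := hK.G₀_pos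
    refine ⟨H₀ * G₀ * (1 / 4 : ℝ) ^ k, by positivity, max (3 * B) (H + 1),
      fun v w hv hw hwB => hK.mul_rpow_le hw ?_ ?_⟩
    · linarith [(le_max_left _ _).trans hv]
    · linarith [(le_max_right _ _).trans hv]

end KernelAssumptionA

end Kernel

section Collision

/-- The change `φ (v + w) - φ v - φ w` of an observable `φ` when particles of sizes `v` and `w`
coagulate. -/
def increment (φ : ℝ → ℝ) (p : ℝ × ℝ) : ℝ := φ (p.1 + p.2) - φ p.1 - φ p.2

/-- The coagulation operator with kernel `κ` at the size distribution `μ`, tested against `φ`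
(without the factor `1 / 2` for unordered pairs). -/
def collision (κ : ℝ × ℝ → ℝ) (μ : Measure ℝ) (φ : ℝ → ℝ) : ℝ :=
  ∫ p, κ p * increment φ p ∂μ.prod μ

/-- A nonnegative kernel controlled by a multiple of the product of the weights `1 + v ^ γ`. -/
structure IsDominatedKernel (κ : ℝ × ℝ → ℝ) (γ c : ℝ) : Prop where
  measurable : Measurable κ
  nonneg : ∀ p, 0 ≤ κ p
  le : ∀ p, κ p ≤ c * (momentWeight γ p.1 * momentWeight γ p.2)

variable {κ F : ℝ × ℝ → ℝ} {γ c B : ℝ} {μ : Measure ℝ}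

theorem measurable_increment {φ : ℝ → ℝ} (hφ : Measurable φ) : Measurable (increment φ) := by
  unfold increment
  fun_prop

theorem abs_increment_le (φ : ℝ →ᵇ ℝ) (p : ℝ × ℝ) : |increment φ p| ≤ 3 * ‖φ‖ :=
  calc |increment φ p| ≤ |φ (p.1 + p.2)| + |φ p.1| + |φ p.2| :=
        (abs_sub _ _).trans (by gcongr; exact abs_sub _ _)
    _ ≤ ‖φ‖ + ‖φ‖ + ‖φ‖ := by gcongr <;> exact φ.norm_coe_le_norm _
    _ = 3 * ‖φ‖ := by ring

namespace IsDominatedKernel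

theorem const_nonneg (hκ : IsDominatedKernel κ γ c) : 0 ≤ c :=
  nonneg_of_mul_nonneg_left ((hκ.nonneg 0).trans (hκ.le 0))
    (mul_pos momentWeight_pos momentWeight_pos)

theorem norm_mul_le (hκ : IsDominatedKernel κ γ c) (hF : ∀ p, |F p| ≤ B) (p : ℝ × ℝ) :
    ‖κ p * F p‖ ≤ B * (c * (momentWeight γ p.1 * momentWeight γ p.2)) := by
  rw [Real.norm_eq_abs, abs_mul, abs_of_nonneg (hκ.nonneg p), mul_comm]
  exact mul_le_mul (hF p) (hκ.le p) (hκ.nonneg p) ((abs_nonneg _).trans (hF p))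

theorem integrable_bound (c B : ℝ) (hμ : Integrable (momentWeight γ) μ) :
    Integrable (fun p => B * (c * (momentWeight γ p.1 * momentWeight γ p.2))) (μ.prod μ) :=
  ((hμ.mul_prod hμ).const_mul c).const_mul B

theorem integrable_mul (hκ : IsDominatedKernel κ γ c)
    (hμ : Integrable (momentWeight γ) μ) (hF : Measurable F) (hFB : ∀ p, |F p| ≤ B) :
    Integrable (fun p => κ p * F p) (μ.prod μ) :=
  (integrable_bound c B hμ).mono' (hκ.measurable.mul hF).aestronglyMeasurable
    (Eventually.of_forall (hκ.norm_mul_le hFB))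

theorem norm_integral_mul_le [SFinite μ] (hκ : IsDominatedKernel κ γ c)
    (hμ : Integrable (momentWeight γ) μ) (hFB : ∀ p, |F p| ≤ B) :
    ‖∫ p, κ p * F p ∂μ.prod μ‖ ≤
      B * (c * ((∫ v, momentWeight γ v ∂μ) * ∫ v, momentWeight γ v ∂μ)) := by
  refine (norm_integral_le_of_norm_le (integrable_bound c B hμ)
    (Eventually.of_forall (hκ.norm_mul_le hFB))).trans_eq ?_
  rw [integral_const_mul, integral_const_mul, integral_prod_mul]

end IsDominatedKernel

end Collision

section MomentFlow

/-- A narrowly continuous curve of size distributions on `(0,∞)` indexed by `[0,T]`, with moments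
of order `γ` uniformly bounded by `C`. -/
structure IsMomentFlow (γ T C : ℝ) (f : ℝ → Measure ℝ) : Prop where
  ae_pos : ∀ t ∈ Icc 0 T, ∀ᵐ v ∂f t, 0 < v
  continuousOn_integral : ∀ φ : ℝ →ᵇ ℝ, ContinuousOn (fun t => ∫ v, φ v ∂f t) (Icc 0 T)
  integrable_momentWeight : ∀ t ∈ Icc 0 T, Integrable (momentWeight γ) (f t)
  integral_momentWeight_le : ∀ t ∈ Icc 0 T, ∫ v, momentWeight γ v ∂f t ≤ C

theorem isFiniteMeasure_of_integrable_momentWeight {γ : ℝ} {μ : Measure ℝ}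
    (hμ : Integrable (momentWeight γ) μ) : IsFiniteMeasure μ := by
  have hone : Integrable (fun _ => (1 : ℝ)) μ :=
    hμ.mono' aestronglyMeasurable_const (Eventually.of_forall fun _ => by
      simpa only [norm_one] using one_le_momentWeight)
  exact (integrable_const_iff.1 hone).resolve_left one_ne_zero

namespace IsMomentFlow

variable {κ F : ℝ × ℝ → ℝ} {γ T c C B r s t : ℝ} {f : ℝ → Measure ℝ}

theorem isFiniteMeasure (hf : IsMomentFlow γ T C f) (ht : t ∈ Icc 0 T) : IsFiniteMeasure (f t) :=
  isFiniteMeasure_of_integrable_momentWeight (hf.integrable_momentWeight t ht)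

theorem ae_prod_pos (hf : IsMomentFlow γ T C f) (ht : t ∈ Icc 0 T) :
    ∀ᵐ p ∂(f t).prod (f t), 0 < p.1 ∧ 0 < p.2 := by
  have := hf.isFiniteMeasure ht
  exact (Measure.quasiMeasurePreserving_fst.ae (hf.ae_pos t ht)).and
    (Measure.quasiMeasurePreserving_snd.ae (hf.ae_pos t ht))

theorem integrable_kernel_mul (hf : IsMomentFlow γ T C f) (hκ : IsDominatedKernel κ γ c)
    (ht : t ∈ Icc 0 T) (hF : Measurable F) (hFB : ∀ p, |F p| ≤ B) :
    Integrable (fun p => κ p * F p) ((f t).prod (f t)) :=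
  hκ.integrable_mul (hf.integrable_momentWeight t ht) hF hFB

theorem norm_integral_kernel_mul_le (hf : IsMomentFlow γ T C f) (hκ : IsDominatedKernel κ γ c)
    (ht : t ∈ Icc 0 T) (hFB : ∀ p, |F p| ≤ B) :
    ‖∫ p, κ p * F p ∂(f t).prod (f t)‖ ≤ B * (c * (C * C)) := by
  have := hf.isFiniteMeasure ht
  have hB : 0 ≤ B := (abs_nonneg _).trans (hFB 0)
  have hc : 0 ≤ c := hκ.const_nonneg
  have hm : 0 ≤ ∫ v, momentWeight γ v ∂f t := integral_nonneg fun _ => momentWeight_pos.le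
  have hmC := hf.integral_momentWeight_le t ht
  have hC : 0 ≤ C := hm.trans hmC
  exact (hκ.norm_integral_mul_le (hf.integrable_momentWeight t ht) hFB).trans (by gcongr)

theorem aemeasurable_integral_prod (hf : IsMomentFlow γ T C f) (hF : Measurable F) :
    AEMeasurable (fun s => ∫ p, F p ∂(f s).prod (f s)) (volume.restrict (Icc 0 T)) := by
  have (s : Icc 0 T) : IsFiniteMeasure (f s) := hf.isFiniteMeasure s.2
  refine aemeasurable_restrict_of_measurable_subtype measurableSet_Icc
    (measurable_integral_prod_self (measurable_measure_of_measurable_integral fun φ => ?_) hF)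
  exact (continuousOn_iff_continuous_domRestrict.1 (hf.continuousOn_integral φ)).measurable

theorem intervalIntegrable_integral_kernel_mul (hf : IsMomentFlow γ T C f)
    (hκ : IsDominatedKernel κ γ c) (hF : Measurable F) (hFB : ∀ p, |F p| ≤ B)
    (hr : r ∈ Icc 0 T) (ht : t ∈ Icc 0 T) :
    IntervalIntegrable (fun s => ∫ p, κ p * F p ∂(f s).prod (f s)) volume r t := by
  have hsub : uIoc r t ⊆ Icc 0 T := uIoc_subset_uIcc.trans (uIcc_subset_Icc hr ht)
  refine (intervalIntegrable_const (c := B * (c * (C * C)))).mono_fun'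
    ((hf.aemeasurable_integral_prod (hκ.measurable.mul hF)).mono_set hsub).aestronglyMeasurable
    (ae_restrict_of_forall_mem measurableSet_uIoc fun s hs =>
      hf.norm_integral_kernel_mul_le hκ (hsub hs) hFB)

theorem intervalIntegrable_collision (hf : IsMomentFlow γ T C f) (hκ : IsDominatedKernel κ γ c)
    (φ : ℝ →ᵇ ℝ) (hr : r ∈ Icc 0 T) (ht : t ∈ Icc 0 T) :
    IntervalIntegrable (fun s => collision κ (f s) φ) volume r t :=
  hf.intervalIntegrable_integral_kernel_mul hκ (measurable_increment φ.continuous.measurable)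
    (abs_increment_le φ) hr ht

theorem norm_collision_le (hf : IsMomentFlow γ T C f) (hκ : IsDominatedKernel κ γ c)
    (φ : ℝ →ᵇ ℝ) (ht : t ∈ Icc 0 T) : ‖collision κ (f t) φ‖ ≤ 3 * ‖φ‖ * (c * (C * C)) :=
  hf.norm_integral_kernel_mul_le hκ ht (abs_increment_le φ)

end IsMomentFlow

end MomentFlow

section WeakFormulation

theorem exists_seq_hasCompactSupport_tendsto (φ : ℝ →ᵇ ℝ) :
    ∃ ψ : ℕ → ℝ →ᵇ ℝ, (∀ n, HasCompactSupport (ψ n)) ∧ (∀ n, tsupport (ψ n) ⊆ Ioi 0) ∧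
      (∀ n, ‖ψ n‖ ≤ ‖φ‖) ∧ ∀ v, 0 < v → Tendsto (fun n => ψ n v) atTop (𝓝 (φ v)) := by
  have hK (n : ℕ) : Icc (1 / ((n : ℝ) + 1)) (n + 1) ⊆ Ioi 0 := fun v hv =>
    lt_of_lt_of_le (by positivity) hv.1
  choose χ hχ_one hχ_compact hχ_pos hχ_mem using fun n =>
    exists_continuousMap_one_of_isCompact_subset_isOpen isCompact_Icc isOpen_Ioi (hK n)
  have hbound (n : ℕ) (v : ℝ) : ‖χ n v * φ v‖ ≤ ‖φ‖ := by
    rw [norm_mul, Real.norm_of_nonneg (hχ_mem n v).1]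
    exact (mul_le_of_le_one_left (norm_nonneg _) (hχ_mem n v).2).trans (φ.norm_coe_le_norm v)
  let ψ (n : ℕ) : ℝ →ᵇ ℝ := .ofNormedAddCommGroup (fun v => χ n v * φ v)
    ((χ n).continuous.mul φ.continuous) ‖φ‖ (hbound n)
  refine ⟨ψ, fun n => HasCompactSupport.mul_right (hχ_compact n),
    fun n => (tsupport_mul_subset_left (f := χ n)).trans (hχ_pos n),
    fun n => BoundedContinuousFunction.norm_ofNormedAddCommGroup_le _ (norm_nonneg φ) (hbound n),
    fun v hv => tendsto_const_nhds.congr' ?_⟩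
  obtain ⟨N, hN⟩ := exists_nat_ge (max v (1 / v))
  filter_upwards [eventually_ge_atTop N] with n hn
  have hNn : max v (1 / v) ≤ (n : ℝ) + 1 :=
    hN.trans ((Nat.cast_le.2 hn).trans (le_add_of_nonneg_right zero_le_one))
  have hv_mem : v ∈ Icc (1 / ((n : ℝ) + 1)) (n + 1) :=
    ⟨(one_div_le (by positivity) hv).2 ((le_max_right _ _).trans hNn),
      (le_max_left _ _).trans hNn⟩
  calc φ v = 1 * φ v := (one_mul _).symm
    _ = χ n v * φ v := by rw [hχ_one n hv_mem, Pi.one_apply]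

theorem tendsto_integral_of_norm_le {μ : Measure ℝ} [IsFiniteMeasure μ] (hμ : ∀ᵐ v ∂μ, 0 < v)
    {ψ : ℕ → ℝ →ᵇ ℝ} {φ : ℝ →ᵇ ℝ} {M : ℝ} (hψ : ∀ n, ‖ψ n‖ ≤ M)
    (hlim : ∀ v, 0 < v → Tendsto (fun n => ψ n v) atTop (𝓝 (φ v))) :
    Tendsto (fun n => ∫ v, ψ n v ∂μ) atTop (𝓝 (∫ v, φ v ∂μ)) :=
  tendsto_integral_of_dominated_convergence (fun _ => M)
    (fun n => (ψ n).continuous.aestronglyMeasurable) (integrable_const M)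
    (fun n => Eventually.of_forall fun v => ((ψ n).norm_coe_le_norm v).trans (hψ n))
    (hμ.mono hlim)

namespace IsMomentFlow

variable {κ : ℝ × ℝ → ℝ} {γ T c C t M : ℝ} {f : ℝ → Measure ℝ} {ψ : ℕ → ℝ →ᵇ ℝ} {φ : ℝ →ᵇ ℝ}

theorem tendsto_collision (hf : IsMomentFlow γ T C f) (hκ : IsDominatedKernel κ γ c)
    (ht : t ∈ Icc 0 T) (hψ : ∀ n, ‖ψ n‖ ≤ M)
    (hlim : ∀ v, 0 < v → Tendsto (fun n => ψ n v) atTop (𝓝 (φ v))) :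
    Tendsto (fun n => collision κ (f t) (ψ n)) atTop (𝓝 (collision κ (f t) φ)) := by
  have := hf.isFiniteMeasure ht
  have hincr (n : ℕ) (p : ℝ × ℝ) : |increment (ψ n) p| ≤ 3 * M :=
    (abs_increment_le (ψ n) p).trans (by gcongr; exact hψ n)
  refine tendsto_integral_of_dominated_convergence _
    (fun n => (hκ.measurable.mul
      (measurable_increment (ψ n).continuous.measurable)).aestronglyMeasurable)
    (IsDominatedKernel.integrable_bound c (3 * M) (hf.integrable_momentWeight t ht))
    (fun n => Eventually.of_forall (hκ.norm_mul_le (hincr n))) ?_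
  filter_upwards [hf.ae_prod_pos ht] with p hp
  exact (((hlim _ (add_pos hp.1 hp.2)).sub (hlim _ hp.1)).sub (hlim _ hp.2)).const_mul _

theorem tendsto_intervalIntegral_collision (hf : IsMomentFlow γ T C f)
    (hκ : IsDominatedKernel κ γ c) (ht : t ∈ Icc 0 T) (hψ : ∀ n, ‖ψ n‖ ≤ M)
    (hlim : ∀ v, 0 < v → Tendsto (fun n => ψ n v) atTop (𝓝 (φ v))) :
    Tendsto (fun n => ∫ s in 0..t, collision κ (f s) (ψ n)) atTop
      (𝓝 (∫ s in 0..t, collision κ (f s) φ)) := by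
  have h0 : (0 : ℝ) ∈ Icc 0 T := ⟨le_rfl, ht.1.trans ht.2⟩
  have hsub : uIoc 0 t ⊆ Icc 0 T := uIoc_subset_uIcc.trans (uIcc_subset_Icc h0 ht)
  have hc := hκ.const_nonneg
  have hbound (n : ℕ) (s : ℝ) (hs : s ∈ uIoc 0 t) :
      ‖collision κ (f s) (ψ n)‖ ≤ 3 * M * (c * (C * C)) :=
    (hf.norm_collision_le hκ (ψ n) (hsub hs)).trans
      (by gcongr; exacts [mul_nonneg hc (mul_self_nonneg C), hψ n])
  exact intervalIntegral.tendsto_integral_filter_of_dominated_convergence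
    (fun _ => 3 * M * (c * (C * C)))
    (Eventually.of_forall fun n =>
      (hf.intervalIntegrable_collision hκ (ψ n) h0 ht).def'.aestronglyMeasurable)
    (Eventually.of_forall fun n => Eventually.of_forall (hbound n)) intervalIntegrable_const
    (Eventually.of_forall fun s hs => hf.tendsto_collision hκ (hsub hs) hψ hlim)

theorem collision_quadrantKernel {K : ℝ → ℝ → ℝ} (hf : IsMomentFlow γ T C f)
    (hK : IsDominatedKernel (quadrantKernel K) γ c) (φ : ℝ →ᵇ ℝ) (ht : t ∈ Icc 0 T) :
    collision (quadrantKernel K) (f t) φ =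
      ∫ v, ∫ v', K v v' * (φ (v + v') - φ v - φ v') ∂f t ∂f t := by
  have := hf.isFiniteMeasure ht
  rw [collision, integral_prod _ (hf.integrable_kernel_mul hK ht
    (measurable_increment φ.continuous.measurable) (abs_increment_le φ))]
  refine integral_congr_ae ((hf.ae_pos t ht).mono fun v hv =>
    integral_congr_ae ((hf.ae_pos t ht).mono fun w hw => ?_))
  simp only [quadrantKernel_apply hv hw, increment]

end IsMomentFlow

theorem ae_pos_of_Iic_eq_zero {μ : Measure ℝ} (hμ : μ (Iic 0) = 0) : ∀ᵐ v ∂μ, 0 < v := by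
  simp only [ae_iff, not_lt]
  exact hμ

theorem integrable_momentWeight_iff {γ : ℝ} {μ : Measure ℝ} (hμ : ∀ᵐ v ∂μ, 0 < v) :
    Integrable (momentWeight γ) μ ↔ Integrable (fun v => 1 + v ^ γ) μ :=
  integrable_congr (hμ.mono fun _ => momentWeight_of_pos)

/-- A moment flow solving the coagulation equation with kernel `κ` between any two times, against
all bounded continuous observables. -/
structure IsCoagulationFlow (κ : ℝ × ℝ → ℝ) (γ T c C : ℝ) (f : ℝ → Measure ℝ) : Prop where
  kernel : IsDominatedKernel κ γ c
  flow : IsMomentFlow γ T C f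
  balance : ∀ φ : ℝ →ᵇ ℝ, ∀ r ∈ Icc 0 T, ∀ t ∈ Icc 0 T,
    ∫ v, φ v ∂f t - ∫ v, φ v ∂f r = 1 / 2 * ∫ s in r..t, collision κ (f s) φ

namespace IsOffDiagonalGellingKernel

variable {K : ℝ → ℝ → ℝ} {γ : ℝ}

theorem nonneg (hK : IsOffDiagonalGellingKernel K γ) {v w : ℝ} (hv : 0 < v) (hw : 0 < w) :
    0 ≤ K v w := by
  rcases eq_or_ne v w with rfl | hvw
  · exact (hK.diag v hv).ge
  · exact (hK.pos v w hv hw hvw).le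

theorem exists_isDominatedKernel (hK : IsOffDiagonalGellingKernel K γ) :
    ∃ c, IsDominatedKernel (quadrantKernel K) γ c := by
  obtain ⟨c, hc⟩ := hK.exists_le
  have hc₀ : 0 ≤ c := nonneg_of_mul_nonneg_left
    ((hK.nonneg one_pos one_pos).trans (hc 1 1 one_pos one_pos)) (by positivity)
  refine ⟨c, hK.measurable, fun p => ?_, fun p => ?_⟩
  · exact indicator_nonneg (fun p hp => hK.nonneg hp.1 hp.2) p
  · refine indicator_apply_le' (fun hp => ?_) (fun _ => ?_)
    · rw [momentWeight_of_pos hp.1, momentWeight_of_pos hp.2]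
      exact hc _ _ hp.1 hp.2
    · exact mul_nonneg hc₀ (mul_pos momentWeight_pos momentWeight_pos).le

theorem superlinear_quadrantKernel (hK : IsOffDiagonalGellingKernel K γ) {B : ℝ} (hB : 0 < B) :
    ∃ c₀, 0 < c₀ ∧ ∃ L, ∀ v w, L ≤ v → 0 < w → w ≤ B →
      c₀ * v ^ γ ≤ quadrantKernel K (v, w) := by
  obtain ⟨c₀, hc₀, L, hL⟩ := hK.superlinear B hB
  refine ⟨c₀, hc₀, max L 1, fun v w hv hw hwB => ?_⟩
  rw [quadrantKernel_apply (one_pos.trans_le ((le_max_right _ _).trans hv)) hw]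
  exact hL v w ((le_max_left _ _).trans hv) hw hwB

end IsOffDiagonalGellingKernel

namespace IsWeakSolution

variable {K : ℝ → ℝ → ℝ} {γ T c C t : ℝ} {f : ℝ → Measure ℝ} {fin : Measure ℝ}

theorem exists_isMomentFlow (hf : IsWeakSolution K γ T f fin) : ∃ C, IsMomentFlow γ T C f := by
  obtain ⟨C, hC⟩ := hf.moment_bound
  have hpos (t : ℝ) (ht : t ∈ Icc 0 T) : ∀ᵐ v ∂f t, 0 < v := ae_pos_of_Iic_eq_zero (hf.conc t ht)
  refine ⟨C, hpos, fun φ => hf.time_cont φ φ.continuous ⟨‖φ‖, φ.norm_coe_le_norm⟩,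
    fun t ht => (integrable_momentWeight_iff (hpos t ht)).2 (hC t ht).1, fun t ht => ?_⟩
  rw [integral_congr_ae ((hpos t ht).mono fun v => momentWeight_of_pos)]
  exact (hC t ht).2

theorem integral_sub_integral_eq (hsol : IsWeakSolution K γ T f fin) (hf : IsMomentFlow γ T C f)
    (hK : IsDominatedKernel (quadrantKernel K) γ c) [IsFiniteMeasure fin]
    (hfin : ∀ᵐ v ∂fin, 0 < v) (φ : ℝ →ᵇ ℝ) (ht : t ∈ Icc 0 T) :
    ∫ v, φ v ∂f t - ∫ v, φ v ∂fin =
      1 / 2 * ∫ s in 0..t, collision (quadrantKernel K) (f s) φ := by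
  have := hf.isFiniteMeasure ht
  obtain ⟨ψ, hψ_compact, hψ_pos, hψ_norm, hψ_lim⟩ := exists_seq_hasCompactSupport_tendsto φ
  have hsub : uIcc 0 t ⊆ Icc 0 T := uIcc_subset_Icc ⟨le_rfl, ht.1.trans ht.2⟩ ht
  have hψ (n : ℕ) : ∫ v, ψ n v ∂f t - ∫ v, ψ n v ∂fin =
      1 / 2 * ∫ s in 0..t, collision (quadrantKernel K) (f s) (ψ n) := by
    rw [hsol.weak_form (ψ n) (ψ n).continuous (hψ_compact n) (hψ_pos n) t ht,
      intervalIntegral.integral_congr fun s hs => hf.collision_quadrantKernel hK (ψ n) (hsub hs)]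
  refine tendsto_nhds_unique ((tendsto_integral_of_norm_le (hf.ae_pos t ht) hψ_norm hψ_lim).sub
    (tendsto_integral_of_norm_le hfin hψ_norm hψ_lim)) ?_
  simp only [hψ]
  exact (hf.tendsto_intervalIntegral_collision hK ht hψ_norm hψ_lim).const_mul _

theorem apply_zero (hsol : IsWeakSolution K γ T f fin) (hf : IsMomentFlow γ T C f)
    (hK : IsDominatedKernel (quadrantKernel K) γ c) [IsFiniteMeasure fin]
    (hfin : ∀ᵐ v ∂fin, 0 < v) (hT : 0 ≤ T) : f 0 = fin := by
  have h0 : (0 : ℝ) ∈ Icc 0 T := left_mem_Icc.2 hT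
  have := hf.isFiniteMeasure h0
  refine ext_of_forall_integral_eq_of_IsFiniteMeasure fun φ => ?_
  rw [← sub_eq_zero, hsol.integral_sub_integral_eq hf hK hfin φ h0,
    intervalIntegral.integral_same, mul_zero]

theorem isCoagulationFlow (hsol : IsWeakSolution K γ T f fin) (hf : IsMomentFlow γ T C f)
    (hK : IsDominatedKernel (quadrantKernel K) γ c) [IsFiniteMeasure fin]
    (hfin : ∀ᵐ v ∂fin, 0 < v) : IsCoagulationFlow (quadrantKernel K) γ T c C f where
  kernel := hK
  flow := hf
  balance φ r hr t ht := by
    have h0 : (0 : ℝ) ∈ Icc 0 T := ⟨le_rfl, hr.1.trans hr.2⟩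
    have hr' := hsol.integral_sub_integral_eq hf hK hfin φ hr
    have ht' := hsol.integral_sub_integral_eq hf hK hfin φ ht
    rw [← intervalIntegral.integral_interval_sub_left
      (hf.intervalIntegrable_collision hK φ h0 ht) (hf.intervalIntegrable_collision hK φ h0 hr)]
    linarith

end IsWeakSolution

end WeakFormulation

section Support

theorem exists_hasCompactSupport_of_mem_nhds {X : Type*} [TopologicalSpace X] [T2Space X]
    [LocallyCompactSpace X] {x : X} {U : Set X} (hU : U ∈ 𝓝 x) :
    ∃ φ : X →ᵇ ℝ, 0 ≤ φ ∧ HasCompactSupport φ ∧ 0 < φ x ∧ Function.support φ ⊆ U := by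
  obtain ⟨V, hVU, hV, hxV⟩ := mem_nhds_iff.1 hU
  obtain ⟨χ, hχ_one, hχ_compact, hχV, hχ_mem⟩ :=
    exists_continuousMap_one_of_isCompact_subset_isOpen isCompact_singleton hV
      (singleton_subset_iff.2 hxV)
  refine ⟨.ofNormedAddCommGroup χ χ.continuous 1 fun y => ?_, fun y => (hχ_mem y).1, hχ_compact,
    ?_, (subset_tsupport χ).trans (hχV.trans hVU)⟩
  · rw [Real.norm_of_nonneg (hχ_mem y).1]
    exact (hχ_mem y).2
  · exact one_pos.trans_eq (hχ_one rfl).symm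

theorem mem_measureSupport_iff_integral_pos {X : Type*} [TopologicalSpace X] [T2Space X]
    [LocallyCompactSpace X] [MeasurableSpace X] [OpensMeasurableSpace X] {μ : Measure X}
    [IsFiniteMeasure μ] {x : X} :
    x ∈ μ.support ↔
      ∀ φ : X →ᵇ ℝ, 0 ≤ φ → HasCompactSupport φ → 0 < φ x → 0 < ∫ y, φ y ∂μ := by
  rw [Measure.mem_support_iff_forall]
  constructor
  · intro hx φ hφ _ hφx
    refine (integral_pos_iff_support_of_nonneg hφ (φ.integrable μ)).2 ?_
    exact hx _ (φ.continuous.isOpen_support.mem_nhds hφx.ne')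
  · intro hx U hU
    obtain ⟨φ, hφ, hφ_compact, hφx, hφU⟩ := exists_hasCompactSupport_of_mem_nhds hU
    exact ((integral_pos_iff_support_of_nonneg hφ (φ.integrable μ)).1
      (hx φ hφ hφ_compact hφx)).trans_le (measure_mono hφU)

theorem exists_momentWeight_mul_le {γ : ℝ} (hγ : 0 ≤ γ) {φ : ℝ → ℝ} (hφ : 0 ≤ φ)
    (hφ_compact : HasCompactSupport φ) :
    ∃ R, 0 ≤ R ∧ ∀ v, momentWeight γ v * φ v ≤ R * φ v := by
  obtain ⟨R, hR⟩ :=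
    hφ_compact.exists_bound_of_continuousOn (continuous_momentWeight hγ).continuousOn
  refine ⟨|R|, abs_nonneg R, fun v => ?_⟩
  by_cases hv : v ∈ tsupport φ
  · exact mul_le_mul_of_nonneg_right
      (((le_abs_self _).trans (hR v hv)).trans (le_abs_self R)) (hφ v)
  · rw [image_eq_zero_of_notMem_tsupport hv, mul_zero, mul_zero]

/-- The gain part of the coagulation operator, tested against `φ`. -/
def gain (κ : ℝ × ℝ → ℝ) (μ : Measure ℝ) (φ : ℝ → ℝ) : ℝ :=
  ∫ p, κ p * φ (p.1 + p.2) ∂μ.prod μ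

theorem gain_pos {κ : ℝ × ℝ → ℝ} {μ : Measure ℝ} [SFinite μ] {φ : ℝ → ℝ} {x y : ℝ}
    (hκ : ∀ p, 0 ≤ κ p) (hκ_pos : ∀ v w, 0 < v → 0 < w → v ≠ w → 0 < κ (v, w))
    (hφ : 0 ≤ φ) (hφ_cont : Continuous φ)
    (hint : Integrable (fun p => κ p * φ (p.1 + p.2)) (μ.prod μ)) (hx : 0 < x) (hy : 0 < y)
    (hxy : x ≠ y) (hx_mem : x ∈ μ.support) (hy_mem : y ∈ μ.support) (hφxy : 0 < φ (x + y)) :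
    0 < gain κ μ φ := by
  rw [gain, integral_pos_iff_support_of_nonneg (fun p => mul_nonneg (hκ p) (hφ _)) hint]
  have hnear : ∀ᶠ p : ℝ × ℝ in 𝓝 (x, y), p ∈ Function.support fun p => κ p * φ (p.1 + p.2) := by
    have hopen : IsOpen {p : ℝ × ℝ | 0 < p.1 ∧ 0 < p.2 ∧ p.1 ≠ p.2 ∧ 0 < φ (p.1 + p.2)} :=
      (isOpen_lt continuous_const continuous_fst).and <|
        (isOpen_lt continuous_const continuous_snd).and <|
          (isOpen_ne_fun continuous_fst continuous_snd).and <|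
            isOpen_lt continuous_const (by fun_prop)
    filter_upwards [hopen.mem_nhds ⟨hx, hy, hxy, hφxy⟩] with p ⟨hp₁, hp₂, hne, hφp⟩
    exact (mul_pos (hκ_pos _ _ hp₁ hp₂ hne) hφp).ne'
  obtain ⟨U, hU, V, hV, hUV⟩ := mem_nhds_prod_iff.1 hnear
  refine lt_of_lt_of_le ?_ (measure_mono hUV)
  rw [Measure.prod_prod]
  exact ENNReal.mul_pos ((Measure.mem_support_iff_forall x).1 hx_mem U hU).ne'
    ((Measure.mem_support_iff_forall y).1 hy_mem V hV).ne'

namespace IsCoagulationFlow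

variable {κ : ℝ × ℝ → ℝ} {γ T c C r s t x y R : ℝ} {f : ℝ → Measure ℝ} {φ : ℝ →ᵇ ℝ}

theorem integrable_gain (hf : IsCoagulationFlow κ γ T c C f) (φ : ℝ →ᵇ ℝ) (hs : s ∈ Icc 0 T) :
    Integrable (fun p => κ p * φ (p.1 + p.2)) ((f s).prod (f s)) :=
  hf.flow.integrable_kernel_mul hf.kernel hs (by fun_prop) fun _ => φ.norm_coe_le_norm _

theorem integrable_loss (hf : IsCoagulationFlow κ γ T c C f) (φ : ℝ →ᵇ ℝ) (hs : s ∈ Icc 0 T) :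
    Integrable (fun p => κ p * (φ p.1 + φ p.2)) ((f s).prod (f s)) :=
  hf.flow.integrable_kernel_mul hf.kernel hs (by fun_prop) fun _ =>
    (abs_add_le _ _).trans (add_le_add (φ.norm_coe_le_norm _) (φ.norm_coe_le_norm _))

theorem collision_eq (hf : IsCoagulationFlow κ γ T c C f) (φ : ℝ →ᵇ ℝ) (hs : s ∈ Icc 0 T) :
    collision κ (f s) φ =
      gain κ (f s) φ - ∫ p, κ p * (φ p.1 + φ p.2) ∂(f s).prod (f s) := by
  rw [gain, ← integral_sub (hf.integrable_gain φ hs) (hf.integrable_loss φ hs)]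
  exact integral_congr_ae (Eventually.of_forall fun p => by simp only [increment]; ring)

theorem loss_le (hf : IsCoagulationFlow κ γ T c C f) (hφ : 0 ≤ φ)
    (hR : ∀ v, momentWeight γ v * φ v ≤ R * φ v) (hs : s ∈ Icc 0 T) :
    ∫ p, κ p * (φ p.1 + φ p.2) ∂(f s).prod (f s) ≤
      2 * (c * (∫ v, momentWeight γ v ∂f s) * (R * ∫ v, φ v ∂f s)) := by
  have := hf.flow.isFiniteMeasure hs
  have hW := hf.flow.integrable_momentWeight s hs
  have hRφ : Integrable (fun v => R * φ v) (f s) := (φ.integrable (f s)).const_mul R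
  have hc := hf.kernel.const_nonneg
  calc ∫ p, κ p * (φ p.1 + φ p.2) ∂(f s).prod (f s)
      ≤ ∫ p, c * (R * φ p.1 * momentWeight γ p.2 + momentWeight γ p.1 * (R * φ p.2))
          ∂(f s).prod (f s) := by
        refine integral_mono (hf.integrable_loss φ hs)
          (((hRφ.mul_prod hW).add (hW.mul_prod hRφ)).const_mul c) fun p => ?_
        have hW₁ : 0 < momentWeight γ p.1 := momentWeight_pos
        have hW₂ : 0 < momentWeight γ p.2 := momentWeight_pos
        calc κ p * (φ p.1 + φ p.2)
            ≤ c * (momentWeight γ p.1 * momentWeight γ p.2) * (φ p.1 + φ p.2) :=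
              mul_le_mul_of_nonneg_right (hf.kernel.le p) (add_nonneg (hφ _) (hφ _))
          _ = c * (momentWeight γ p.1 * φ p.1 * momentWeight γ p.2 +
                momentWeight γ p.1 * (momentWeight γ p.2 * φ p.2)) := by ring
          _ ≤ c * (R * φ p.1 * momentWeight γ p.2 + momentWeight γ p.1 * (R * φ p.2)) := by
              gcongr c * (?_ * _ + _ * ?_) <;> exact hR _
    _ = 2 * (c * (∫ v, momentWeight γ v ∂f s) * (R * ∫ v, φ v ∂f s)) := by
        rw [integral_const_mul, integral_add (hRφ.mul_prod hW) (hW.mul_prod hRφ),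
          integral_prod_mul (fun v => R * φ v), integral_prod_mul (momentWeight γ) fun v => R * φ v,
          integral_const_mul]
        ring

theorem gain_sub_le_collision (hf : IsCoagulationFlow κ γ T c C f) (hφ : 0 ≤ φ) (hR₀ : 0 ≤ R)
    (hR : ∀ v, momentWeight γ v * φ v ≤ R * φ v) (hs : s ∈ Icc 0 T) :
    gain κ (f s) φ - 2 * (c * C * R) * ∫ v, φ v ∂f s ≤ collision κ (f s) φ := by
  have hc := hf.kernel.const_nonneg
  have hφ_int : 0 ≤ ∫ v, φ v ∂f s := integral_nonneg hφ
  rw [hf.collision_eq φ hs]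
  gcongr
  calc _ ≤ 2 * (c * (∫ v, momentWeight γ v ∂f s) * (R * ∫ v, φ v ∂f s)) := hf.loss_le hφ hR hs
    _ ≤ 2 * (c * C * (R * ∫ v, φ v ∂f s)) := by
        gcongr
        exact hf.flow.integral_momentWeight_le s hs
    _ = 2 * (c * C * R) * ∫ v, φ v ∂f s := by ring

theorem exists_gain_sub_le_collision (hf : IsCoagulationFlow κ γ T c C f) (hγ : 0 ≤ γ)
    (hT : 0 ≤ T) (hφ : 0 ≤ φ) (hφ_compact : HasCompactSupport φ) :
    ∃ A, 0 ≤ A ∧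
      ∀ s ∈ Icc 0 T, gain κ (f s) φ - 2 * A * ∫ v, φ v ∂f s ≤ collision κ (f s) φ := by
  obtain ⟨R, hR₀, hR⟩ := exists_momentWeight_mul_le hγ hφ hφ_compact
  have hC : 0 ≤ C := (integral_nonneg fun _ => momentWeight_pos.le).trans
    (hf.flow.integral_momentWeight_le 0 (left_mem_Icc.2 hT))
  exact ⟨c * C * R, mul_nonneg (mul_nonneg hf.kernel.const_nonneg hC) hR₀,
    fun s hs => hf.gain_sub_le_collision hφ hR₀ hR hs⟩

theorem exists_integral_le_exp_mul (hf : IsCoagulationFlow κ γ T c C f) (hγ : 0 ≤ γ)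
    (hT : 0 ≤ T) (hφ : 0 ≤ φ) (hφ_compact : HasCompactSupport φ) :
    ∃ A, ∀ r ∈ Icc 0 T, ∀ t ∈ Icc 0 T, r ≤ t →
      ∫ v, φ v ∂f r ≤ Real.exp (A * (t - r)) * ∫ v, φ v ∂f t := by
  obtain ⟨A, hA, hcoll⟩ := hf.exists_gain_sub_le_collision hγ hT hφ hφ_compact
  have hcont := hf.flow.continuousOn_integral φ
  refine ⟨A, fun r hr t ht hrt => le_exp_mul_of_le_add_mul_integral (X := fun s => ∫ v, φ v ∂f s)
    hA hrt (hcont.mono (Icc_subset_Icc hr.1 ht.2)) fun s hs => ?_⟩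
  have hs' : s ∈ Icc 0 T := ⟨hr.1.trans hs.1, hs.2.trans ht.2⟩
  have hsub : Icc s t ⊆ Icc 0 T := Icc_subset_Icc hs'.1 ht.2
  have hlower : ∫ u in s..t, -(2 * A) * ∫ v, φ v ∂f u ≤ ∫ u in s..t, collision κ (f u) φ := by
    refine intervalIntegral.integral_mono_on hs.2
      (((hcont.mono hsub).intervalIntegrable_of_Icc hs.2).const_mul _)
      (hf.flow.intervalIntegrable_collision hf.kernel φ hs' ht) fun u hu => ?_
    have hgain : 0 ≤ gain κ (f u) φ :=
      integral_nonneg fun p => mul_nonneg (hf.kernel.nonneg p) (hφ _)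
    linarith [hcoll u (hsub hu)]
  rw [intervalIntegral.integral_const_mul] at hlower
  linarith [hf.balance φ s hs' t ht]

theorem support_mono (hf : IsCoagulationFlow κ γ T c C f) (hγ : 0 ≤ γ) (hr : r ∈ Icc 0 T)
    (ht : t ∈ Icc 0 T) (hrt : r ≤ t) : (f r).support ⊆ (f t).support := by
  have := hf.flow.isFiniteMeasure hr
  have := hf.flow.isFiniteMeasure ht
  intro x hx
  refine mem_measureSupport_iff_integral_pos.2 fun φ hφ hφ_compact hφx => ?_
  obtain ⟨A, hA⟩ := hf.exists_integral_le_exp_mul hγ (hr.1.trans hr.2) hφ hφ_compact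
  have hφr := mem_measureSupport_iff_integral_pos.1 hx φ hφ hφ_compact hφx
  exact pos_of_mul_pos_right (hφr.trans_le (hA r hr t ht hrt)) (Real.exp_pos _).le

theorem add_mem_support (hf : IsCoagulationFlow κ γ T c C f) (hγ : 0 ≤ γ)
    (hκ_pos : ∀ v w, 0 < v → 0 < w → v ≠ w → 0 < κ (v, w)) (hr : r ∈ Icc 0 T) (ht : t ∈ Icc 0 T)
    (hrt : r < t) (hx : 0 < x) (hy : 0 < y) (hxy : x ≠ y) (hx_mem : x ∈ (f r).support)
    (hy_mem : y ∈ (f r).support) : x + y ∈ (f t).support := by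
  have := hf.flow.isFiniteMeasure ht
  by_contra hmem
  obtain ⟨φ, hφ, hφ_compact, hφxy, hφ_zero⟩ : ∃ φ : ℝ →ᵇ ℝ, 0 ≤ φ ∧ HasCompactSupport φ ∧
      0 < φ (x + y) ∧ ∫ v, φ v ∂f t ≤ 0 := by
    simpa only [mem_measureSupport_iff_integral_pos, not_forall, not_lt, exists_prop] using hmem
  obtain ⟨B, hB⟩ := hf.exists_integral_le_exp_mul hγ (hr.1.trans hr.2) hφ hφ_compact
  obtain ⟨A, -, hcoll⟩ := hf.exists_gain_sub_le_collision hγ (hr.1.trans hr.2) hφ hφ_compact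
  have hzero (s : ℝ) (hs : s ∈ Icc r t) : ∫ v, φ v ∂f s = 0 :=
    le_antisymm ((hB s ⟨hr.1.trans hs.1, hs.2.trans ht.2⟩ t ht hs.2).trans
      (mul_nonpos_of_nonneg_of_nonpos (Real.exp_pos _).le hφ_zero)) (integral_nonneg hφ)
  have hcoll_pos (s : ℝ) (hs : s ∈ Ioo r t) : 0 < collision κ (f s) φ := by
    have hs' : s ∈ Icc 0 T := ⟨hr.1.trans hs.1.le, hs.2.le.trans ht.2⟩
    have := hf.flow.isFiniteMeasure hs'
    have hmono := hf.support_mono hγ hr hs' hs.1.le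
    have hgain : 0 < gain κ (f s) φ := gain_pos hf.kernel.nonneg hκ_pos hφ φ.continuous
      (hf.integrable_gain φ hs') hx hy hxy (hmono hx_mem) (hmono hy_mem) hφxy
    have hcoll_s := hcoll s hs'
    rw [hzero s ⟨hs.1.le, hs.2.le⟩, mul_zero, sub_zero] at hcoll_s
    exact hgain.trans_le hcoll_s
  have hpos := intervalIntegral.intervalIntegral_pos_of_pos_on
    (hf.flow.intervalIntegrable_collision hf.kernel φ hr ht) hcoll_pos hrt
  have hbal := hf.balance φ r hr t ht
  rw [hzero r ⟨le_rfl, hrt.le⟩, hzero t ⟨hrt.le, le_rfl⟩] at hbal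
  linarith

theorem nat_mul_add_mem_support (hf : IsCoagulationFlow κ γ T c C f) (hγ : 0 ≤ γ)
    (hκ_pos : ∀ v w, 0 < v → 0 < w → v ≠ w → 0 < κ (v, w)) (hx : 0 < x) (hxy : x < y)
    (hx_mem : x ∈ (f 0).support) (hy_mem : y ∈ (f 0).support) (n : ℕ) (ht : t ∈ Ioc 0 T) :
    n * x + y ∈ (f t).support := by
  have h0 : (0 : ℝ) ∈ Icc 0 T := left_mem_Icc.2 (ht.1.le.trans ht.2)
  induction n generalizing t with
  | zero => simpa using hf.support_mono hγ h0 (Ioc_subset_Icc_self ht) ht.1.le hy_mem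
  | succ n ih =>
    have hhalf : t / 2 ∈ Ioc 0 T := ⟨half_pos ht.1, (half_le_self ht.1.le).trans ht.2⟩
    have hhalf' := Ioc_subset_Icc_self hhalf
    have hlt : x < n * x + y := hxy.trans_le (le_add_of_nonneg_left (by positivity))
    have hadd := hf.add_mem_support hγ hκ_pos hhalf' (Ioc_subset_Icc_self ht) (half_lt_self ht.1)
      hx (hx.trans hlt) hlt.ne (hf.support_mono hγ h0 hhalf' hhalf.1.le hx_mem) (ih hhalf)
    rwa [show x + (n * x + y) = ((n + 1 : ℕ) : ℝ) * x + y by push_cast; ring] at hadd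

theorem measure_Ici_pos (hf : IsCoagulationFlow κ γ T c C f) (hγ : 0 ≤ γ)
    (hκ_pos : ∀ v w, 0 < v → 0 < w → v ≠ w → 0 < κ (v, w))
    (hsupp : ((f 0).support ∩ Ioi 0).Nontrivial) (ht : t ∈ Ioc 0 T) (L : ℝ) :
    0 < f t (Ici L) := by
  obtain ⟨x, hx, y, hy, hxy⟩ := hsupp.exists_lt
  obtain ⟨n, hn⟩ := exists_nat_gt (L / x)
  have hL : L < n * x + y := ((div_lt_iff₀ hx.2).1 hn).trans (lt_add_of_pos_right _ hy.2)
  exact (Measure.mem_support_iff_forall _).1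
    (hf.nat_mul_add_mem_support hγ hκ_pos hx.2 hxy hx.1 hy.1 n ht) _ (Ici_mem_nhds hL)

end IsCoagulationFlow

end Support

section TailCutoff

/-- The profile `exp (1 - Λ * v ^ (-p))`, frozen below the threshold `L`. A particle of size `v`
absorbing a smaller one of size `w` multiplies it by at least `exp (c * Λ * w * v ^ (-(p + 1)))`. -/
def expProfile (p Λ L v : ℝ) : ℝ := Real.exp (1 - Λ * max v L ^ (-p))

/-- The cutoff rising from `0` at sizes up to `L` to its saturation value at sizes of order
`Λ ^ (1 / p)`; the observable `v * tailCutoff p Λ L v` measures the mass carried by large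
particles. -/
def tailCutoff (p Λ L v : ℝ) : ℝ := min 1 (expProfile p Λ L v) - expProfile p Λ L L

/-- The part of the size `v` not counted by the saturated profile. It is a bounded observable, and
on `(0,∞)` it differs from `-(v * tailCutoff p Λ L v)` by a multiple of `v`. -/
def sizeDeficit (p Λ L v : ℝ) : ℝ := max v 0 * (1 - min 1 (expProfile p Λ L v))

variable {p Λ L L₀ v w : ℝ}

theorem mul_rpow_neg_le_sub (hp : 0 < p) (hv : 0 < v) (hw : 0 < w) :
    p * w * (v + w) ^ (-(p + 1)) ≤ v ^ (-p) - (v + w) ^ (-p) := by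
  have hvw : 0 < v + w := by positivity
  have hx : 0 < v / (v + w) := by positivity
  have bernoulli : 1 + p * (w / (v + w)) ≤ (v / (v + w)) ^ (-p) := by
    have hfrac : w / (v + w) = 1 - v / (v + w) := by field_simp; ring
    rw [Real.rpow_def_of_pos hx, hfrac]
    have hlog := mul_le_mul_of_nonneg_left (Real.log_le_sub_one_of_pos hx) hp.le
    linarith [Real.add_one_le_exp (Real.log (v / (v + w)) * -p)]
  have hscale : v ^ (-p) = (v + w) ^ (-p) * (v / (v + w)) ^ (-p) := by
    rw [← Real.mul_rpow hvw.le hx.le, mul_div_cancel₀ _ hvw.ne']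
  have hexponent : (v + w) ^ (-(p + 1)) = (v + w) ^ (-p) / (v + w) := by
    rw [neg_add, ← sub_eq_add_neg, Real.rpow_sub_one hvw.ne']
  calc p * w * (v + w) ^ (-(p + 1)) = (v + w) ^ (-p) * (p * (w / (v + w))) := by
        rw [hexponent]; ring
    _ ≤ (v + w) ^ (-p) * ((v / (v + w)) ^ (-p) - 1) := by gcongr; linarith
    _ = v ^ (-p) - (v + w) ^ (-p) := by rw [hscale]; ring

theorem pos_of_one_le_mul_rpow (hL : 0 < L) (hΛ : 1 ≤ Λ * L ^ (-p)) : 0 < Λ :=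
  pos_of_mul_pos_left (one_pos.trans_le hΛ) (Real.rpow_nonneg hL.le _)

theorem expProfile_pos : 0 < expProfile p Λ L v := Real.exp_pos _

theorem expProfile_of_le (hv : L ≤ v) : expProfile p Λ L v = Real.exp (1 - Λ * v ^ (-p)) := by
  rw [expProfile, max_eq_left hv]

theorem continuous_expProfile (hL : 0 < L) : Continuous (expProfile p Λ L) :=
  Real.continuous_exp.comp <| continuous_const.sub <| continuous_const.mul <|
    (continuous_id.max continuous_const).rpow_const fun _ =>
      Or.inl (hL.trans_le (le_max_right _ _)).ne'

theorem monotone_expProfile (hp : 0 ≤ p) (hL : 0 < L) (hΛ : 0 ≤ Λ) :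
    Monotone (expProfile p Λ L) := fun u v huv => by
  have hu : 0 < max u L := hL.trans_le (le_max_right _ _)
  have hrpow : max v L ^ (-p) ≤ max u L ^ (-p) :=
    Real.rpow_le_rpow_of_nonpos hu (max_le_max_right _ huv) (neg_nonpos.2 hp)
  exact Real.exp_le_exp.2 (by gcongr)

theorem continuous_tailCutoff (hL : 0 < L) : Continuous (tailCutoff p Λ L) :=
  (continuous_const.min (continuous_expProfile hL)).sub continuous_const

theorem monotone_tailCutoff (hp : 0 ≤ p) (hL : 0 < L) (hΛ : 0 ≤ Λ) :
    Monotone (tailCutoff p Λ L) := fun _ _ huv =>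
  sub_le_sub_right (min_le_min_left 1 (monotone_expProfile hp hL hΛ huv)) _

theorem tailCutoff_of_le (hΛ : 1 ≤ Λ * L ^ (-p)) (hv : v ≤ L) : tailCutoff p Λ L v = 0 := by
  rw [tailCutoff, expProfile, expProfile, max_eq_right hv, max_self, min_eq_right, sub_self]
  rw [Real.exp_le_one_iff]
  linarith

theorem tailCutoff_nonneg (hp : 0 ≤ p) (hL : 0 < L) (hΛ : 1 ≤ Λ * L ^ (-p)) :
    0 ≤ tailCutoff p Λ L v := by
  rw [← tailCutoff_of_le hΛ (min_le_right v L)]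
  exact monotone_tailCutoff hp hL (pos_of_one_le_mul_rpow hL hΛ).le (min_le_left v L)

theorem tailCutoff_le_one : tailCutoff p Λ L v ≤ 1 :=
  (sub_le_self _ expProfile_pos.le).trans (min_le_left _ _)

theorem exp_neg_le_tailCutoff (hL : L ≤ L₀) (hL₀ : 1 ≤ Λ * L₀ ^ (-p))
    (hgap : 1 ≤ Λ * (L ^ (-p) - L₀ ^ (-p))) :
    Real.exp (-(Λ * L₀ ^ (-p))) ≤ tailCutoff p Λ L L₀ := by
  have hL₀_le : expProfile p Λ L L₀ ≤ 1 := by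
    rw [expProfile_of_le hL, Real.exp_le_one_iff]
    linarith
  have hsplit : expProfile p Λ L L₀ = Real.exp 1 * Real.exp (-(Λ * L₀ ^ (-p))) := by
    rw [expProfile_of_le hL, ← Real.exp_add, sub_eq_add_neg]
  have hL_le : expProfile p Λ L L ≤ Real.exp (-(Λ * L₀ ^ (-p))) := by
    rw [expProfile_of_le le_rfl]
    exact Real.exp_le_exp.2 (by linarith)
  rw [tailCutoff, min_eq_right hL₀_le, hsplit]
  nlinarith [Real.add_one_le_exp 1, Real.exp_pos (-(Λ * L₀ ^ (-p)))]

theorem mul_tailCutoff_eq (hv : 0 < v) :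
    v * tailCutoff p Λ L v = (1 - expProfile p Λ L L) * v - sizeDeficit p Λ L v := by
  rw [tailCutoff, sizeDeficit, max_eq_left hv.le]
  ring

theorem neg_increment_sizeDeficit (hv : 0 < v) (hw : 0 < w) :
    -increment (sizeDeficit p Λ L) (v, w) = increment (fun u => u * tailCutoff p Λ L u) (v, w) := by
  simp only [increment, mul_tailCutoff_eq (add_pos hv hw), mul_tailCutoff_eq hv,
    mul_tailCutoff_eq hw]
  ring

theorem increment_mul_tailCutoff_nonneg (hp : 0 ≤ p) (hL : 0 < L) (hΛ : 0 ≤ Λ) (hv : 0 < v)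
    (hw : 0 < w) : 0 ≤ increment (fun u => u * tailCutoff p Λ L u) (v, w) := by
  have hmono := monotone_tailCutoff hp hL hΛ
  have hmv := mul_le_mul_of_nonneg_left (hmono (le_add_of_nonneg_right hw.le : v ≤ v + w)) hv.le
  have hmw := mul_le_mul_of_nonneg_left (hmono (le_add_of_nonneg_left hv.le : w ≤ v + w)) hw.le
  simp only [increment]
  linarith

theorem sizeDeficit_nonneg : 0 ≤ sizeDeficit p Λ L v :=
  mul_nonneg (le_max_right _ _) (sub_nonneg.2 (min_le_left _ _))

theorem one_le_expProfile (hp : 0 < p) (hΛ : 0 < Λ) (hv : Λ ^ p⁻¹ ≤ v) :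
    1 ≤ expProfile p Λ L v := by
  have hrpow : max v L ^ (-p) ≤ Λ⁻¹ :=
    calc max v L ^ (-p) ≤ (Λ ^ p⁻¹) ^ (-p) :=
          Real.rpow_le_rpow_of_nonpos (Real.rpow_pos_of_pos hΛ _) (hv.trans (le_max_left _ _))
            (neg_nonpos.2 hp.le)
      _ = Λ⁻¹ := by
          rw [← Real.rpow_mul hΛ.le, mul_neg, inv_mul_cancel₀ hp.ne', Real.rpow_neg_one]
  rw [expProfile, Real.one_le_exp_iff, sub_nonneg]
  calc Λ * max v L ^ (-p) ≤ Λ * Λ⁻¹ := by gcongr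
    _ = 1 := mul_inv_cancel₀ hΛ.ne'

theorem sizeDeficit_le (hp : 0 < p) (hΛ : 0 < Λ) : sizeDeficit p Λ L v ≤ Λ ^ p⁻¹ := by
  have hmax : 0 ≤ Λ ^ p⁻¹ := Real.rpow_nonneg hΛ.le _
  rcases le_total v (Λ ^ p⁻¹) with hv | hv
  · have hmin : 0 < min 1 (expProfile p Λ L v) := lt_min one_pos expProfile_pos
    exact (mul_le_of_le_one_right (le_max_right _ _) (by linarith)).trans (max_le hv hmax)
  · rw [sizeDeficit, min_eq_left (one_le_expProfile hp hΛ hv), sub_self, mul_zero]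
    exact hmax

theorem exists_coe_eq_sizeDeficit (hp : 0 < p) (hL : 0 < L) (hΛ : 0 < Λ) :
    ∃ ψ : ℝ →ᵇ ℝ, ⇑ψ = sizeDeficit p Λ L :=
  ⟨BoundedContinuousFunction.ofNormedAddCommGroup (sizeDeficit p Λ L)
    ((continuous_id.max continuous_const).mul
      (continuous_const.sub (continuous_const.min (continuous_expProfile hL))))
    (Λ ^ p⁻¹) fun _ => by
      rw [Real.norm_eq_abs, abs_of_nonneg sizeDeficit_nonneg]
      exact sizeDeficit_le hp hΛ, rfl⟩

theorem mul_tailCutoff_add_le_of_saturated (hp : 0 ≤ p) (hL : 0 < L) (hΛ : 1 ≤ Λ * L ^ (-p))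
    (hv : 0 < v) (hw : 0 < w) (hsat : Λ * 2 ^ (-p) ≤ v ^ p) :
    (2 : ℝ) ^ (-p) * Λ * w * (v * tailCutoff p Λ L v) ≤
      v ^ (p + 1) * ((v + w) * tailCutoff p Λ L (v + w) - v * tailCutoff p Λ L v) := by
  have hmono : tailCutoff p Λ L v ≤ tailCutoff p Λ L (v + w) :=
    monotone_tailCutoff hp hL (pos_of_one_le_mul_rpow hL hΛ).le (le_add_of_nonneg_right hw.le)
  have hρ : 0 ≤ tailCutoff p Λ L v := tailCutoff_nonneg hp hL hΛ
  calc (2 : ℝ) ^ (-p) * Λ * w * (v * tailCutoff p Λ L v)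
      = Λ * 2 ^ (-p) * (w * (v * tailCutoff p Λ L v)) := by ring
    _ ≤ v ^ p * (w * (v * tailCutoff p Λ L v)) := by gcongr
    _ = v ^ (p + 1) * ((v + w) * tailCutoff p Λ L v - v * tailCutoff p Λ L v) := by
        rw [Real.rpow_add_one hv.ne']; ring
    _ ≤ v ^ (p + 1) * ((v + w) * tailCutoff p Λ L (v + w) - v * tailCutoff p Λ L v) := by gcongr

theorem tailCutoff_eq_sub_of_unsaturated (hp : 0 ≤ p) (hv₀ : 0 < v) (hv : L ≤ v) (hwv : w ≤ v)
    (hΛ : 0 ≤ Λ) (hw : 0 ≤ w) (hsat : v ^ p ≤ Λ * 2 ^ (-p)) :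
    tailCutoff p Λ L (v + w) = Real.exp (1 - Λ * (v + w) ^ (-p)) - expProfile p Λ L L := by
  have hvp : 0 < v ^ p := Real.rpow_pos_of_pos hv₀ p
  have hone : 1 ≤ Λ * (v + w) ^ (-p) :=
    calc 1 = v ^ p * (v ^ p)⁻¹ := (mul_inv_cancel₀ hvp.ne').symm
      _ ≤ Λ * 2 ^ (-p) * (v ^ p)⁻¹ := by gcongr
      _ = Λ * (2 * v) ^ (-p) := by
          rw [Real.mul_rpow two_pos.le hv₀.le, Real.rpow_neg hv₀.le]; ring
      _ ≤ Λ * (v + w) ^ (-p) := by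
          gcongr Λ * ?_
          exact Real.rpow_le_rpow_of_nonpos (by positivity) (by linarith) (neg_nonpos.2 hp)
  rw [tailCutoff, expProfile_of_le (by linarith), min_eq_right]
  rw [Real.exp_le_one_iff]
  linarith

theorem mul_sub_rpow_le_tailCutoff_sub (hp : 0 ≤ p) (hv₀ : 0 < v) (hv : L ≤ v)
    (hw : 0 ≤ w) (hwv : w ≤ v) (hΛ : 0 ≤ Λ) (hsat : v ^ p ≤ Λ * 2 ^ (-p)) :
    tailCutoff p Λ L v * (Λ * (v ^ (-p) - (v + w) ^ (-p))) ≤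
      tailCutoff p Λ L (v + w) - tailCutoff p Λ L v := by
  have hv_eq := tailCutoff_eq_sub_of_unsaturated (w := 0) hp hv₀ hv hv₀.le hΛ le_rfl hsat
  rw [add_zero] at hv_eq
  have hgap : 0 ≤ v ^ (-p) - (v + w) ^ (-p) := sub_nonneg.2 <|
    Real.rpow_le_rpow_of_nonpos hv₀ (le_add_of_nonneg_right hw) (neg_nonpos.2 hp)
  have hexp : Real.exp (1 - Λ * (v + w) ^ (-p)) =
      Real.exp (1 - Λ * v ^ (-p)) * Real.exp (Λ * (v ^ (-p) - (v + w) ^ (-p))) := by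
    rw [← Real.exp_add]; ring_nf
  rw [tailCutoff_eq_sub_of_unsaturated hp hv₀ hv hwv hΛ hw hsat, hv_eq, sub_sub_sub_cancel_right]
  calc (Real.exp (1 - Λ * v ^ (-p)) - expProfile p Λ L L) * (Λ * (v ^ (-p) - (v + w) ^ (-p)))
      ≤ Real.exp (1 - Λ * v ^ (-p)) * (Λ * (v ^ (-p) - (v + w) ^ (-p))) := by
        gcongr
        exact sub_le_self _ expProfile_pos.le
    _ ≤ Real.exp (1 - Λ * v ^ (-p)) * (Real.exp (Λ * (v ^ (-p) - (v + w) ^ (-p))) - 1) := by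
        gcongr
        exact le_sub_iff_add_le.2 (Real.add_one_le_exp _)
    _ = Real.exp (1 - Λ * (v + w) ^ (-p)) - Real.exp (1 - Λ * v ^ (-p)) := by rw [hexp]; ring

theorem mul_tailCutoff_add_le_of_unsaturated (hp : 0 < p) (hL : 0 < L) (hΛ : 1 ≤ Λ * L ^ (-p))
    (hv : L ≤ v) (hw : 0 < w) (hwv : w ≤ v) (hsat : v ^ p ≤ Λ * 2 ^ (-p)) :
    p * (2 : ℝ) ^ (-(p + 1)) * Λ * w * (v * tailCutoff p Λ L v) ≤
      v ^ (p + 1) * ((v + w) * tailCutoff p Λ L (v + w) - v * tailCutoff p Λ L v) := by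
  have hv₀ : 0 < v := hL.trans_le hv
  have hΛ₀ : 0 < Λ := pos_of_one_le_mul_rpow hL hΛ
  have hρ (u : ℝ) : 0 ≤ tailCutoff p Λ L u := tailCutoff_nonneg hp.le hL hΛ
  have hdouble : (2 : ℝ) ^ (-(p + 1)) ≤ v ^ (p + 1) * (v + w) ^ (-(p + 1)) :=
    calc (2 : ℝ) ^ (-(p + 1)) = v ^ (p + 1) * (2 * v) ^ (-(p + 1)) := by
          rw [Real.mul_rpow two_pos.le hv₀.le, Real.rpow_neg hv₀.le (p + 1)]
          field_simp
      _ ≤ v ^ (p + 1) * (v + w) ^ (-(p + 1)) := by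
          gcongr _ * ?_
          exact Real.rpow_le_rpow_of_nonpos (by positivity) (by linarith) (by linarith)
  have hv_nonneg := hρ v
  have hgain := mul_nonneg hw.le (hρ (v + w))
  calc p * (2 : ℝ) ^ (-(p + 1)) * Λ * w * (v * tailCutoff p Λ L v)
      ≤ p * (v ^ (p + 1) * (v + w) ^ (-(p + 1))) * Λ * w * (v * tailCutoff p Λ L v) := by gcongr
    _ = v ^ (p + 1) * (v * (tailCutoff p Λ L v * (Λ * (p * w * (v + w) ^ (-(p + 1)))))) := by ring
    _ ≤ v ^ (p + 1) * (v * (tailCutoff p Λ L v * (Λ * (v ^ (-p) - (v + w) ^ (-p))))) := by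
        gcongr
        exact mul_rpow_neg_le_sub hp hv₀ hw
    _ ≤ v ^ (p + 1) * (v * (tailCutoff p Λ L (v + w) - tailCutoff p Λ L v)) := by
        gcongr
        exact mul_sub_rpow_le_tailCutoff_sub hp.le hv₀ hv hw.le hwv hΛ₀.le hsat
    _ ≤ v ^ (p + 1) * ((v + w) * tailCutoff p Λ L (v + w) - v * tailCutoff p Λ L v) := by
        gcongr
        linarith

theorem exists_mul_le_rpow_mul_increment (hp : 0 < p) :
    ∃ c₁, 0 < c₁ ∧ ∀ Λ L v w, 0 < L → 1 ≤ Λ * L ^ (-p) → L ≤ v → 0 < w → w ≤ L →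
      c₁ * Λ * w * (v * tailCutoff p Λ L v) ≤
        v ^ (p + 1) * increment (fun u => u * tailCutoff p Λ L u) (v, w) := by
  refine ⟨min (2 ^ (-p)) (p * 2 ^ (-(p + 1))), by positivity, fun Λ L v w hL hΛ hv hw hwL => ?_⟩
  have hv₀ : 0 < v := hL.trans_le hv
  have hΛ₀ : 0 < Λ := pos_of_one_le_mul_rpow hL hΛ
  have hρ : 0 ≤ tailCutoff p Λ L v := tailCutoff_nonneg hp.le hL hΛ
  simp only [increment, tailCutoff_of_le hΛ hwL, mul_zero, sub_zero]
  rcases le_total (Λ * 2 ^ (-p)) (v ^ p) with hsat | hsat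
  · exact le_trans (by gcongr; exact min_le_left _ _)
      (mul_tailCutoff_add_le_of_saturated hp.le hL hΛ hv₀ hw hsat)
  · exact le_trans (by gcongr; exact min_le_right _ _)
      (mul_tailCutoff_add_le_of_unsaturated hp hL hΛ hv hw (hwL.trans hv) hsat)

end TailCutoff

section Gelation

/-- The mass of `μ` carried by large particles, as seen by the cutoff `tailCutoff p Λ L`. -/
def tailMass (p Λ L : ℝ) (μ : Measure ℝ) : ℝ := ∫ v, v * tailCutoff p Λ L v ∂μ

variable {κ : ℝ × ℝ → ℝ} {γ T c C p Λ L L₀ B m a r s t v w : ℝ} {μ : Measure ℝ}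
  {f : ℝ → Measure ℝ}

theorem abs_le_momentWeight (hγ : 1 ≤ γ) : |v| ≤ momentWeight γ v := by
  rcases le_total |v| 1 with hv | hv
  · exact hv.trans one_le_momentWeight
  · exact (Real.self_le_rpow_of_one_le hv hγ).trans (le_add_of_nonneg_left zero_le_one)

theorem sub_indicator_Iic_le (hγ : 1 ≤ γ) (hB : 0 < B) (hv : 0 < v) :
    v - (Iic B).indicator id v ≤ B ^ (-(γ - 1)) * momentWeight γ v := by
  rcases le_or_gt v B with hvB | hvB
  · rw [indicator_of_mem (mem_Iic.2 hvB), id, sub_self]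
    exact mul_nonneg (by positivity) momentWeight_pos.le
  · rw [indicator_of_notMem (notMem_Iic.2 hvB), sub_zero, momentWeight_of_pos hv]
    calc v = v ^ (-(γ - 1)) * v ^ γ := by
          rw [← Real.rpow_add hv, neg_sub, sub_add_cancel, Real.rpow_one]
      _ ≤ B ^ (-(γ - 1)) * v ^ γ := by
          gcongr ?_ * _
          exact Real.rpow_le_rpow_of_nonpos hB hvB.le (by linarith)
      _ ≤ B ^ (-(γ - 1)) * (1 + v ^ γ) := by gcongr; linarith

theorem integrable_mul_tailCutoff (hp : 0 ≤ p) (hL : 0 < L) (hΛ : 1 ≤ Λ * L ^ (-p))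
    (hμ : Integrable (fun v => v) μ) : Integrable (fun v => v * tailCutoff p Λ L v) μ := by
  refine hμ.mono (hμ.1.mul (continuous_tailCutoff hL).aestronglyMeasurable)
    (Eventually.of_forall fun v => ?_)
  rw [norm_mul, Real.norm_of_nonneg (tailCutoff_nonneg hp hL hΛ)]
  exact mul_le_of_le_one_right (norm_nonneg _) tailCutoff_le_one

theorem tailMass_nonneg (hp : 0 ≤ p) (hL : 0 < L) (hΛ : 1 ≤ Λ * L ^ (-p))
    (hμ : ∀ᵐ v ∂μ, 0 < v) : 0 ≤ tailMass p Λ L μ :=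
  integral_nonneg_of_ae <| hμ.mono fun _ hv => mul_nonneg hv.le (tailCutoff_nonneg hp hL hΛ)

theorem tailMass_le_integral (hp : 0 ≤ p) (hL : 0 < L) (hΛ : 1 ≤ Λ * L ^ (-p))
    (hμ : ∀ᵐ v ∂μ, 0 < v) (hμ_int : Integrable (fun v => v) μ) :
    tailMass p Λ L μ ≤ ∫ v, v ∂μ :=
  integral_mono_ae (integrable_mul_tailCutoff hp hL hΛ hμ_int) hμ_int <|
    hμ.mono fun _ hv => mul_le_of_le_one_right hv.le tailCutoff_le_one

theorem tailMass_eq [IsFiniteMeasure μ] (hμ : ∀ᵐ v ∂μ, 0 < v)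
    (hμ_int : Integrable (fun v => v) μ) {ψ : ℝ →ᵇ ℝ} (hψ : ⇑ψ = sizeDeficit p Λ L) :
    tailMass p Λ L μ = (1 - expProfile p Λ L L) * ∫ v, v ∂μ - ∫ v, ψ v ∂μ := by
  rw [tailMass, ← integral_const_mul, ← integral_sub (hμ_int.const_mul _) (ψ.integrable μ), hψ]
  exact integral_congr_ae (hμ.mono fun v => mul_tailCutoff_eq)

theorem mul_measureReal_Ici_le_tailMass [IsFiniteMeasure μ] (hp : 0 ≤ p) (hL : 0 < L)
    (hΛ : 1 ≤ Λ * L ^ (-p)) (hμ : ∀ᵐ v ∂μ, 0 < v) (hμ_int : Integrable (fun v => v) μ) :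
    L₀ * tailCutoff p Λ L L₀ * μ.real (Ici L₀) ≤ tailMass p Λ L μ := by
  have hint := integrable_mul_tailCutoff hp hL hΛ hμ_int
  calc L₀ * tailCutoff p Λ L L₀ * μ.real (Ici L₀)
      = ∫ v, (Ici L₀).indicator (fun _ => L₀ * tailCutoff p Λ L L₀) v ∂μ := by
        rw [integral_indicator_const _ measurableSet_Ici, smul_eq_mul, mul_comm]
    _ ≤ tailMass p Λ L μ := by
        refine integral_mono_ae ((integrable_const _).indicator measurableSet_Ici) hint
          (hμ.mono fun v hv => ?_)
        refine indicator_apply_le' (fun hvL => ?_)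
          fun _ => mul_nonneg hv.le (tailCutoff_nonneg hp hL hΛ)
        exact mul_le_mul hvL
          (monotone_tailCutoff hp hL (pos_of_one_le_mul_rpow hL hΛ).le hvL)
          (tailCutoff_nonneg hp hL hΛ) hv.le

theorem exists_mul_le_kernel_mul_increment {c₀ : ℝ} (hp : 0 < p) (hc₀ : 0 < c₀) (hL : 0 < L)
    (hBL : B ≤ L) (hκ : ∀ q, 0 ≤ κ q)
    (hlower : ∀ v w, L ≤ v → 0 < w → w ≤ B → c₀ * v ^ (p + 1) ≤ κ (v, w)) :
    ∃ b, 0 < b ∧ ∀ Λ, 1 ≤ Λ * L ^ (-p) → ∀ v w, 0 < v → 0 < w →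
      b * Λ * (v * tailCutoff p Λ L v * (Iic B).indicator id w) ≤
        κ (v, w) * increment (fun u => u * tailCutoff p Λ L u) (v, w) := by
  obtain ⟨c₁, hc₁, hgain⟩ := exists_mul_le_rpow_mul_increment hp
  refine ⟨c₀ * c₁, by positivity, fun Λ hΛ v w hv hw => ?_⟩
  have hinc : 0 ≤ increment (fun u => u * tailCutoff p Λ L u) (v, w) :=
    increment_mul_tailCutoff_nonneg hp.le hL (pos_of_one_le_mul_rpow hL hΛ).le hv hw
  have hprod := mul_nonneg (hκ (v, w)) hinc
  rcases lt_or_ge v L with hvL | hLv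
  · simpa only [tailCutoff_of_le hΛ hvL.le, mul_zero, zero_mul] using hprod
  rcases lt_or_ge B w with hBw | hwB
  · simpa only [indicator_of_notMem (notMem_Iic.2 hBw), mul_zero] using hprod
  rw [indicator_of_mem (mem_Iic.2 hwB), id]
  calc c₀ * c₁ * Λ * (v * tailCutoff p Λ L v * w)
      = c₀ * (c₁ * Λ * w * (v * tailCutoff p Λ L v)) := by ring
    _ ≤ c₀ * (v ^ (p + 1) * increment (fun u => u * tailCutoff p Λ L u) (v, w)) := by
        gcongr c₀ * ?_
        exact hgain Λ L v w hL hΛ hLv hw (hwB.trans hBL)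
    _ = c₀ * v ^ (p + 1) * increment (fun u => u * tailCutoff p Λ L u) (v, w) := by ring
    _ ≤ κ (v, w) * increment (fun u => u * tailCutoff p Λ L u) (v, w) := by
        gcongr
        exact hlower v w hLv hw hwB

theorem exists_lt_exp_mul {x y z F : ℝ} (hy : 0 < y) (hyx : y < x) (hz : 0 < z) (hF : 0 < F)
    (m : ℝ) : ∃ Λ, 0 ≤ Λ ∧ 1 ≤ Λ * y ∧ 1 ≤ Λ * z ∧ m < Real.exp (Λ * (x - y)) * F := by
  have hlinear {u : ℝ} (hu : 0 < u) : Tendsto (fun Λ => Λ * u) atTop atTop :=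
    tendsto_id.atTop_mul_const hu
  have hexp : Tendsto (fun Λ => Real.exp (Λ * (x - y)) * F) atTop atTop :=
    (Real.tendsto_exp_atTop.comp (hlinear (sub_pos.2 hyx))).atTop_mul_const hF
  exact ((eventually_ge_atTop 0).and <| ((hlinear hy).eventually_ge_atTop 1).and <|
    ((hlinear hz).eventually_ge_atTop 1).and (hexp.eventually_gt_atTop m)).exists

namespace IsMomentFlow

theorem integrable_size (hf : IsMomentFlow γ T C f) (hγ : 1 ≤ γ) (ht : t ∈ Icc 0 T) :
    Integrable (fun v => v) (f t) :=
  (hf.integrable_momentWeight t ht).mono' aestronglyMeasurable_id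
    (Eventually.of_forall fun _ => abs_le_momentWeight hγ)

theorem exists_half_mass_le (hf : IsMomentFlow γ T C f) (hγ : 1 < γ) (hm : 0 < m)
    (hmass : ∀ t ∈ Icc 0 T, ∫ v, v ∂f t = m) :
    ∃ B, 0 < B ∧ ∀ t ∈ Icc 0 T, m / 2 ≤ ∫ v, (Iic B).indicator id v ∂f t := by
  have hlim : Tendsto (fun B : ℝ => B ^ (-(γ - 1)) * C) atTop (𝓝 (0 * C)) :=
    (tendsto_rpow_neg_atTop (sub_pos.2 hγ)).mul_const C
  rw [zero_mul] at hlim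
  obtain ⟨B, hBC, hB⟩ := ((hlim.eventually (gt_mem_nhds (half_pos hm))).and
    (eventually_gt_atTop 0)).exists
  refine ⟨B, hB, fun t ht => ?_⟩
  have hint := hf.integrable_size hγ.le ht
  have hlarge : ∫ v, (v - (Iic B).indicator id v) ∂f t ≤ m / 2 :=
    calc ∫ v, (v - (Iic B).indicator id v) ∂f t
        ≤ ∫ v, B ^ (-(γ - 1)) * momentWeight γ v ∂f t :=
          integral_mono_ae (hint.sub (hint.indicator measurableSet_Iic))
            ((hf.integrable_momentWeight t ht).const_mul _)
            ((hf.ae_pos t ht).mono fun v => sub_indicator_Iic_le hγ.le hB)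
      _ ≤ B ^ (-(γ - 1)) * C := by
          rw [integral_const_mul]
          gcongr
          exact hf.integral_momentWeight_le t ht
      _ ≤ m / 2 := hBC.le
  have hsplit : ∫ v, (v - (Iic B).indicator id v) ∂f t =
      m - ∫ v, (Iic B).indicator id v ∂f t := by
    rw [← hmass t ht]
    exact integral_sub hint (hint.indicator measurableSet_Iic)
  linarith

end IsMomentFlow

namespace IsCoagulationFlow

theorem collision_le_neg_mul_tailMass (hf : IsCoagulationFlow κ γ T c C f) (hγ : 1 ≤ γ)
    (hp : 0 ≤ p) (hL : 0 < L) (hΛ : 1 ≤ Λ * L ^ (-p)) (ha : 0 ≤ a) (hs : s ∈ Icc 0 T)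
    (hgain : ∀ v w, 0 < v → 0 < w → a * (v * tailCutoff p Λ L v * (Iic B).indicator id w) ≤
      κ (v, w) * increment (fun u => u * tailCutoff p Λ L u) (v, w))
    (hB : m / 2 ≤ ∫ v, (Iic B).indicator id v ∂f s) {ψ : ℝ →ᵇ ℝ}
    (hψ : ⇑ψ = sizeDeficit p Λ L) :
    collision κ (f s) ψ ≤ -(a * (m / 2)) * tailMass p Λ L (f s) := by
  have := hf.flow.isFiniteMeasure hs
  have hint := hf.flow.integrable_size hγ hs
  have hX := tailMass_nonneg hp hL hΛ (hf.flow.ae_pos s hs)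
  calc collision κ (f s) ψ
      ≤ ∫ q, -a * (q.1 * tailCutoff p Λ L q.1 * (Iic B).indicator id q.2) ∂(f s).prod (f s) := by
        refine integral_mono_ae
          (hf.flow.integrable_kernel_mul hf.kernel hs
            (measurable_increment ψ.continuous.measurable) (abs_increment_le ψ))
          (((integrable_mul_tailCutoff hp hL hΛ hint).mul_prod
            (hint.indicator measurableSet_Iic)).const_mul _)
          ((hf.flow.ae_prod_pos hs).mono fun q hq => ?_)
        have hq_gain := hgain q.1 q.2 hq.1 hq.2
        rw [← neg_increment_sizeDeficit hq.1 hq.2, ← hψ, mul_neg] at hq_gain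
        simp only [neg_mul]
        exact le_neg_of_le_neg hq_gain
    _ = -(a * (∫ v, (Iic B).indicator id v ∂f s) * tailMass p Λ L (f s)) := by
        rw [integral_const_mul, tailMass,
          integral_prod_mul (fun v => v * tailCutoff p Λ L v) ((Iic B).indicator id)]
        ring
    _ ≤ -(a * (m / 2)) * tailMass p Λ L (f s) := by
        rw [neg_mul]
        gcongr

theorem exp_mul_tailMass_le (hf : IsCoagulationFlow κ γ T c C f) (hγ : 1 ≤ γ) (hp : 0 < p)
    (hL : 0 < L) (hΛ : 1 ≤ Λ * L ^ (-p)) (ha : 0 ≤ a)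
    (hgain : ∀ v w, 0 < v → 0 < w → a * (v * tailCutoff p Λ L v * (Iic B).indicator id w) ≤
      κ (v, w) * increment (fun u => u * tailCutoff p Λ L u) (v, w))
    (hm : 0 ≤ m) (hmass : ∀ t ∈ Icc 0 T, ∫ v, v ∂f t = m)
    (hB : ∀ t ∈ Icc 0 T, m / 2 ≤ ∫ v, (Iic B).indicator id v ∂f t)
    (hr : r ∈ Icc 0 T) (ht : t ∈ Icc 0 T) (hrt : r ≤ t) :
    Real.exp (a * m / 4 * (t - r)) * tailMass p Λ L (f r) ≤ tailMass p Λ L (f t) := by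
  obtain ⟨ψ, hψ⟩ := exists_coe_eq_sizeDeficit hp hL (pos_of_one_le_mul_rpow hL hΛ)
  have hX : ∀ s ∈ Icc 0 T, tailMass p Λ L (f s) =
      (1 - expProfile p Λ L L) * m - ∫ v, ψ v ∂f s := fun s hs => by
    have := hf.flow.isFiniteMeasure hs
    rw [tailMass_eq (hf.flow.ae_pos s hs) (hf.flow.integrable_size hγ hs) hψ, hmass s hs]
  have hX_cont : ContinuousOn (fun s => tailMass p Λ L (f s)) (Icc 0 T) :=
    (continuousOn_const.sub (hf.flow.continuousOn_integral ψ)).congr hX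
  refine exp_mul_le_of_add_mul_integral_le (X := fun s => tailMass p Λ L (f s)) (by positivity)
    hrt (hX_cont.mono (Icc_subset_Icc hr.1 ht.2)) fun s hs => ?_
  have hs' : s ∈ Icc 0 T := ⟨hr.1.trans hs.1, hs.2.trans ht.2⟩
  have hcollision : ∫ u in r..s, collision κ (f u) ψ ≤
      ∫ u in r..s, -(a * (m / 2)) * tailMass p Λ L (f u) := by
    refine intervalIntegral.integral_mono_on hs.1
      (hf.flow.intervalIntegrable_collision hf.kernel ψ hr hs')
      ((continuousOn_const.mul
        (hX_cont.mono (Icc_subset_Icc hr.1 hs'.2))).intervalIntegrable_of_Icc hs.1) fun u hu => ?_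
    have hu' : u ∈ Icc 0 T := ⟨hr.1.trans hu.1, hu.2.trans hs'.2⟩
    exact hf.collision_le_neg_mul_tailMass hγ hp.le hL hΛ ha hu' hgain (hB u hu') hψ
  have hbalance := hf.balance ψ r hr s hs'
  rw [intervalIntegral.integral_const_mul] at hcollision
  rw [hX r hr, hX s hs']
  linarith

theorem exp_mul_measureReal_Ici_le (hf : IsCoagulationFlow κ γ T c C f) (hγ : 1 ≤ γ) (hp : 0 < p)
    (hL : 0 < L) (hL₀ : L ≤ L₀) (hL₀_one : 1 ≤ Λ * L₀ ^ (-p))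
    (hgap : 1 ≤ Λ * (L ^ (-p) - L₀ ^ (-p))) (ha : 0 ≤ a)
    (hgain : ∀ v w, 0 < v → 0 < w → a * (v * tailCutoff p Λ L v * (Iic B).indicator id w) ≤
      κ (v, w) * increment (fun u => u * tailCutoff p Λ L u) (v, w))
    (hm : 0 ≤ m) (hmass : ∀ t ∈ Icc 0 T, ∫ v, v ∂f t = m)
    (hB : ∀ t ∈ Icc 0 T, m / 2 ≤ ∫ v, (Iic B).indicator id v ∂f t)
    (hr : r ∈ Icc 0 T) (ht : t ∈ Icc 0 T) (hrt : r ≤ t) :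
    Real.exp (a * m / 4 * (t - r) - Λ * L₀ ^ (-p)) * (L₀ * (f r).real (Ici L₀)) ≤ m := by
  have hΛ : 1 ≤ Λ * L ^ (-p) := by linarith
  have hL₀_pos : 0 < L₀ := hL.trans_le hL₀
  have := hf.flow.isFiniteMeasure hr
  calc Real.exp (a * m / 4 * (t - r) - Λ * L₀ ^ (-p)) * (L₀ * (f r).real (Ici L₀))
      = Real.exp (a * m / 4 * (t - r)) *
          (L₀ * Real.exp (-(Λ * L₀ ^ (-p))) * (f r).real (Ici L₀)) := by
        rw [sub_eq_add_neg, Real.exp_add]; ring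
    _ ≤ Real.exp (a * m / 4 * (t - r)) *
          (L₀ * tailCutoff p Λ L L₀ * (f r).real (Ici L₀)) := by
        gcongr
        exact exp_neg_le_tailCutoff hL₀ hL₀_one hgap
    _ ≤ Real.exp (a * m / 4 * (t - r)) * tailMass p Λ L (f r) := by
        gcongr
        exact mul_measureReal_Ici_le_tailMass hp.le hL hΛ (hf.flow.ae_pos r hr)
          (hf.flow.integrable_size hγ hr)
    _ ≤ tailMass p Λ L (f t) := hf.exp_mul_tailMass_le hγ hp hL hΛ ha hgain hm hmass hB hr ht hrt
    _ ≤ m := (tailMass_le_integral hp.le hL hΛ (hf.flow.ae_pos t ht)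
        (hf.flow.integrable_size hγ ht)).trans_eq (hmass t ht)

theorem exists_integral_ne (hf : IsCoagulationFlow κ γ T c C f) (hγ : 1 < γ)
    (hsuper : ∀ B, 0 < B → ∃ c₀, 0 < c₀ ∧ ∃ L,
      ∀ v w, L ≤ v → 0 < w → w ≤ B → c₀ * v ^ γ ≤ κ (v, w))
    (hr : r ∈ Ico 0 T) (htail : ∀ L, 0 < f r (Ici L)) (hm : 0 < m) :
    ∃ t ∈ Icc 0 T, ∫ v, v ∂f t ≠ m := by
  by_contra! hmass
  obtain ⟨p, hp, rfl⟩ : ∃ p, 0 < p ∧ γ = p + 1 := ⟨γ - 1, sub_pos.2 hγ, by ring⟩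
  obtain ⟨B, hB, hB_mass⟩ := hf.flow.exists_half_mass_le hγ hm hmass
  obtain ⟨c₀, hc₀, L', hlower⟩ := hsuper B hB
  set L := max L' B
  have hL : 0 < L := lt_max_of_lt_right hB
  obtain ⟨b, hb, hgain⟩ := exists_mul_le_kernel_mul_increment hp hc₀ hL (le_max_right L' B)
    hf.kernel.nonneg fun v w hv => hlower v w ((le_max_left _ _).trans hv)
  have hr' : r ∈ Icc 0 T := Ico_subset_Icc_self hr
  have hT : T ∈ Icc 0 T := ⟨hr'.1.trans hr'.2, le_rfl⟩
  have hrT : 0 < T - r := sub_pos.2 hr.2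
  have := hf.flow.isFiniteMeasure hr'
  have hlim := tendsto_rpow_neg_atTop hp
  obtain ⟨L₀, ⟨hL₀_rate, hL₀_gap⟩, hL₀⟩ := (((hlim.eventually
    (gt_mem_nhds (show 0 < b * m / 4 * (T - r) by positivity))).and (hlim.eventually
    (gt_mem_nhds (show 0 < L ^ (-p) by positivity)))).and (eventually_ge_atTop L)).exists
  have hL₀_pos : 0 < L₀ := hL.trans_le hL₀
  have htail_pos : 0 < L₀ * (f r).real (Ici L₀) :=
    mul_pos hL₀_pos (ENNReal.toReal_pos (htail L₀).ne' (measure_ne_top _ _))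
  obtain ⟨Λ, hΛ₀, hΛ_one, hΛ_gap, hΛ⟩ := exists_lt_exp_mul (by positivity) hL₀_rate
    (sub_pos.2 hL₀_gap) htail_pos m
  refine hΛ.not_ge (le_of_eq_of_le ?_ (hf.exp_mul_measureReal_Ici_le hγ.le hp hL hL₀ hΛ_one hΛ_gap
    (by positivity) (hgain Λ (by linarith)) hm.le hmass hB_mass hr' hT hr.2.le))
  ring_nf

end IsCoagulationFlow

end Gelation

section SingleDirac

variable {K : ℝ → ℝ → ℝ} {γ T : ℝ} {μ : Measure ℝ}

theorem isSingleDirac_of_ae_eq [IsFiniteMeasure μ] {V : ℝ} (hμ : μ ≠ 0) (hV : 0 < V)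
    (h : ∀ᵐ v ∂μ, v = V) : IsSingleDirac μ := by
  have hrestrict : μ.restrict {V} = μ := Measure.restrict_eq_self_of_ae_mem h
  have hmass : μ = μ {V} • Measure.dirac V := by rw [← Measure.restrict_singleton, hrestrict]
  have hpos : μ {V} ≠ 0 := fun hzero => hμ (by rw [hmass, hzero, zero_smul])
  refine ⟨μ.real {V}, V, ENNReal.toReal_pos hpos (measure_ne_top _ _), hV, ?_⟩
  rw [ofReal_measureReal]
  exact hmass

theorem support_inter_Ioi_nontrivial [IsFiniteMeasure μ] (hpos : ∀ᵐ v ∂μ, 0 < v) (hμ : μ ≠ 0)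
    (hdirac : ¬IsSingleDirac μ) : (μ.support ∩ Ioi 0).Nontrivial := by
  have hmem : ∀ᵐ v ∂μ, v ∈ μ.support ∩ Ioi 0 := by
    filter_upwards [Measure.support_mem_ae, hpos] with v hv hv₀ using ⟨hv, hv₀⟩
  have : (ae μ).NeBot := ae_neBot.2 hμ
  obtain ⟨V, hV⟩ := hmem.exists
  by_contra hsub
  rw [not_nontrivial_iff] at hsub
  exact hdirac (isSingleDirac_of_ae_eq hμ hV.2 (hmem.mono fun v hv => hsub hv hV))

theorem exists_isMassConserving_of_isSingleDirac (hdiag : ∀ v, 0 < v → K v v = 0)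
    (hμ_conc : μ (Iic 0) = 0) (hμ_moment : Integrable (fun v => 1 + v ^ γ) μ)
    (hμ : IsSingleDirac μ) :
    ∃ f : ℝ → Measure ℝ, IsWeakSolution K γ T f μ ∧ IsMassConserving T f μ := by
  obtain ⟨M, V, -, hV, rfl⟩ := hμ
  have hmass : Integrable (fun v => v) (ENNReal.ofReal M • Measure.dirac V) :=
    (integrable_dirac ENNReal.coe_lt_top).smul_measure ENNReal.ofReal_ne_top
  refine ⟨fun _ => ENNReal.ofReal M • Measure.dirac V,
    { conc := fun _ _ => hμ_conc
      time_cont := fun _ _ _ => continuousOn_const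
      moment_bound := ⟨_, fun _ _ => ⟨hμ_moment, le_rfl⟩⟩
      weak_form := fun φ _ _ _ t _ => ?_ }, hmass, fun _ _ => ⟨hmass, rfl⟩⟩
  simp only [integral_smul_measure, integral_dirac, hdiag V hV, zero_mul, smul_zero,
    intervalIntegral.integral_zero, mul_zero, sub_self]

theorem integral_size_pos (hμ : μ ≠ 0) (hpos : ∀ᵐ v ∂μ, 0 < v)
    (hint : Integrable (fun v => v) μ) : 0 < ∫ v, v ∂μ := by
  have hfull : μ (Function.support fun v : ℝ => v) = μ univ :=
    measure_congr (eventuallyEq_univ.2 (hpos.mono fun _ => ne_of_gt))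
  rw [integral_pos_iff_support_of_nonneg_ae (hpos.mono fun _ => le_of_lt) hint, hfull]
  exact Measure.measure_univ_pos.2 hμ

end SingleDirac

theorem mass_conserving_solution_iff_singleDirac_general {K : ℝ → ℝ → ℝ} {γ T : ℝ}
    {fin : Measure ℝ} (hK : IsOffDiagonalGellingKernel K γ) (hT : 0 < T)
    (hconc : fin (Iic 0) = 0) (hne : fin ≠ 0) (hγmom : Integrable (fun v => 1 + v ^ γ) fin) :
    (∃ f : ℝ → Measure ℝ, IsWeakSolution K γ T f fin ∧ IsMassConserving T f fin) ↔
      IsSingleDirac fin := by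
  refine ⟨fun ⟨f, hsol, hmass, hcons⟩ => ?_,
    exists_isMassConserving_of_isSingleDirac hK.diag hconc hγmom⟩
  by_contra hdirac
  have hpos := ae_pos_of_Iic_eq_zero hconc
  have := isFiniteMeasure_of_integrable_momentWeight ((integrable_momentWeight_iff hpos).2 hγmom)
  obtain ⟨c, hc⟩ := hK.exists_isDominatedKernel
  obtain ⟨C, hC⟩ := hsol.exists_isMomentFlow
  have hflow := hsol.isCoagulationFlow hC hc hpos
  have hsupp : ((f 0).support ∩ Ioi 0).Nontrivial := by
    rw [hsol.apply_zero hC hc hpos hT.le]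
    exact support_inter_Ioi_nontrivial hpos hne hdirac
  have htail := hflow.measure_Ici_pos (zero_le_one.trans hK.one_lt.le)
    (fun v w hv hw => by rw [quadrantKernel_apply hv hw]; exact hK.pos v w hv hw) hsupp
    ⟨half_pos hT, (half_lt_self hT).le⟩
  obtain ⟨t, ht, hne_mass⟩ := hflow.exists_integral_ne hK.one_lt
    (fun _ => hK.superlinear_quadrantKernel) ⟨(half_pos hT).le, half_lt_self hT⟩ htail
    (integral_size_pos hne hpos hmass)
  exact hne_mass (hcons t ht).2

/-- A mass-conserving weak solution on `[0,T]` exists if and only if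
the initial datum is a single Dirac measure `M • δ_V` with `M, V ∈ (0,∞)`. -/
theorem mass_conserving_solution_iff_singleDirac
    (K h : ℝ → ℝ → ℝ) (g : ℝ → ℝ) (γ H H₀ H₁ G₀ G₁ k : ℝ)
    (hK : KernelAssumptionA K h g γ H H₀ H₁ G₀ G₁ k)
    (T : ℝ) (hT : 0 < T)
    (fin : Measure ℝ) (hconc : fin (Iic 0) = 0) (hne : fin ≠ 0)
    (hγmom : Integrable (fun v => 1 + v ^ γ) fin)
    (hmass : Integrable (fun v => v) fin) :
    (∃ f : ℝ → Measure ℝ, IsWeakSolution K γ T f fin ∧ IsMassConserving T f fin) ↔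
      IsSingleDirac fin :=
  mass_conserving_solution_iff_singleDirac_general hK.isOffDiagonalGellingKernel hT hconc hne hγmom
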